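/- There is a computable algebraic lattice that is not computably isomorphic to any computable complete sublattice of Eq(ℕ). That is: there exists a computable relation r : ℕ → ℕ → Bool which is a partial order on ℕ under which every subset of ℕ has a least upper bound and a greatest lower bound and every element is the supremum of the compact elements below it, such that for every uniformly computable family E : ℕ → ℕ → ℕ → Bool for which each E i is an equivalence relation on ℕ, the relations E i are pairwise distinct, and the set {E i : i ∈ ℕ} is a complete sublattice of Eq(ℕ), there is no computable function φ : ℕ → ℕ satisfying, for all i and j, r i j = true if and only if E (φ i) is contained in E (φ j). -/

import Mathlib

/-- `T` is a tree: a set of finite sequences of natural numbers closed under prefixes. -/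
def IsTree (T : Set (List ℕ)) : Prop :=
  ∀ l ∈ T, ∀ l' : List ℕ, l' <+: l → l' ∈ T

/-- `f : ℕ → ℕ` is an infinite path of `T`: every initial segment
`[f 0, f 1, …, f (k-1)]` belongs to `T`. -/
def IsPath (T : Set (List ℕ)) (f : ℕ → ℕ) : Prop :=
  ∀ k : ℕ, (List.range k).map f ∈ T

/-- An upper bound of `A` with respect to the relation `le`. -/
def RelUpperBound {X : Type*} (le : X → X → Prop) (A : Set X) (j : X) : Prop :=
  ∀ x ∈ A, le x j

/-- A lower bound of `A` with respect to the relation `le`. -/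
def RelLowerBound {X : Type*} (le : X → X → Prop) (A : Set X) (m : X) : Prop :=
  ∀ x ∈ A, le m x

/-- `j` is a least upper bound of `A` with respect to the relation `le`. -/
def RelIsLUB {X : Type*} (le : X → X → Prop) (A : Set X) (j : X) : Prop :=
  RelUpperBound le A j ∧ ∀ k, RelUpperBound le A k → le j k

/-- `m` is a greatest lower bound of `A` with respect to the relation `le`. -/
def RelIsGLB {X : Type*} (le : X → X → Prop) (A : Set X) (m : X) : Prop :=
  RelLowerBound le A m ∧ ∀ k, RelLowerBound le A k → le k m

/-- `c` is a compact element with respect to the relation `le`: whenever `c` is below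
the supremum of a set `A`, it is below the supremum of some finite subset of `A`. -/
def RelIsCompact {X : Type*} (le : X → X → Prop) (c : X) : Prop :=
  ∀ (A : Set X) (j : X), RelIsLUB le A j → le c j →
    ∃ A' ⊆ A, A'.Finite ∧ ∃ j' : X, RelIsLUB le A' j' ∧ le c j'

/-- The binary relation on `ℕ` determined by a Boolean-valued function. -/
def RelOfBool (r : ℕ → ℕ → Bool) (i j : ℕ) : Prop := r i j = true

/-- `r` codes a computable algebraic lattice: `r` is computable, the induced relation is
a partial order on `ℕ` under which every subset has a least upper bound and a greatest
lower bound, and every element is the supremum of the compact elements below it. -/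
def IsComputableAlgebraicLattice (r : ℕ → ℕ → Bool) : Prop :=
  Computable₂ r
  ∧ IsPartialOrder ℕ (RelOfBool r)
  ∧ (∀ A : Set ℕ, (∃ j, RelIsLUB (RelOfBool r) A j) ∧ (∃ m, RelIsGLB (RelOfBool r) A m))
  ∧ (∀ x : ℕ,
      RelIsLUB (RelOfBool r) {c : ℕ | RelIsCompact (RelOfBool r) c ∧ RelOfBool r c x} x)

/-- The set of equivalence relations (setoids) on `ℕ` coded by the family `E`. -/
def SetoidsOf (E : ℕ → ℕ → ℕ → Bool) : Set (Setoid ℕ) :=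
  {s : Setoid ℕ | ∃ i : ℕ, ∀ a b : ℕ, s a b ↔ E i a b = true}

/-- `E` codes a computable complete sublattice of `Eq(ℕ)`: a uniformly computable
family of pairwise distinct equivalence relations on `ℕ` whose associated set of
setoids is closed under arbitrary suprema and infima as computed in `Eq(ℕ)`. -/
def IsComputableCompleteSublatticeOfEq (E : ℕ → ℕ → ℕ → Bool) : Prop :=
  Computable (fun t : ℕ × ℕ × ℕ => E t.1 t.2.1 t.2.2)
  ∧ (∀ i : ℕ, Equivalence (RelOfBool (E i)))
  ∧ (∀ i j : ℕ, i ≠ j → RelOfBool (E i) ≠ RelOfBool (E j))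
  ∧ (∀ S : Set (Setoid ℕ), S ⊆ SetoidsOf E →
      sSup S ∈ SetoidsOf E ∧ sInf S ∈ SetoidsOf E)


namespace Lat

/-- Points. -/
inductive Pt : Type
  | th (e : ℕ) : Pt
  | pi (e i : ℕ) : Pt
  | z (e p : ℕ) : Pt
  | junk (n : ℕ) : Pt

def gen (f : ℕ → ℕ) (j x : ℕ) : Set ℕ :=
  {p | ∃ k, x.testBit k = true ∧ k ≤ p ∧ ∀ u, k ≤ u → u < p → j < f u}

def canon (f : ℕ → ℕ) (j x : ℕ) : Prop :=
  ∀ k, x.testBit k = true → j < k ∧ ∀ k', k' < k → x.testBit k' = true → ∃ u, k' ≤ u ∧ u < k ∧ f u ≤ j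

def Ok (f : ℕ → ℕ) (j : ℕ) (A : Set ℕ) : Prop :=
  (∀ p ∈ A, j < p) ∧ (∀ p ∈ A, j < f p → p + 1 ∈ A) ∧ (A.Finite ∨ {s | f s ≤ j}.Finite)

def El (e j : ℕ) (A : Set ℕ) : Set Pt :=
  {P | match P with
    | .th e' => e' = e
    | .pi e' i => e' = e ∧ j < i
    | .z e' p => e' = e ∧ p ∈ A
    | .junk _ => False}

@[simp] lemma th_mem {e j A e'} : Pt.th e' ∈ El e j A ↔ e' = e := Iff.rfl
@[simp] lemma pi_mem {e j A e' i} : Pt.pi e' i ∈ El e j A ↔ e' = e ∧ j < i := Iff.rfl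
@[simp] lemma z_mem {e j A e' p} : Pt.z e' p ∈ El e j A ↔ e' = e ∧ p ∈ A := Iff.rfl
@[simp] lemma junk_mem {e j A n} : Pt.junk n ∈ El e j A ↔ False := Iff.rfl

open Classical in
noncomputable def S (m : ℕ → ℕ → ℕ) : ℕ → Set Pt
  | 0 => Set.univ
  | 1 => ∅
  | n + 2 =>
    match n.unpair.2 with
    | 0 => {Pt.th n.unpair.1}
    | y + 1 =>
      if canon (m n.unpair.1) y.unpair.1 y.unpair.2 then
        El n.unpair.1 y.unpair.1 (gen (m n.unpair.1) y.unpair.1 y.unpair.2)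
      else {Pt.junk (n + 2)}

lemma gen_ok {f j x} (h : canon f j x) : Ok f j (gen f j x) := by
  refine ⟨?_, ?_, ?_⟩
  · rintro p ⟨k, hk, hkp, -⟩
    exact lt_of_lt_of_le (h k hk).1 hkp
  · rintro p ⟨k, hk, hkp, hu⟩ hp
    refine ⟨k, hk, by omega, fun u h1 h2 => ?_⟩
    rcases Nat.lt_succ_iff_lt_or_eq.1 h2 with h3 | rfl
    · exact hu u h1 h3
    · exact hp
  · by_cases hC : {s | f s ≤ j}.Finite
    · exact Or.inr hC
    · left
      have hinf : ∀ k, ∃ u, k ≤ u ∧ f u ≤ j := by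
        intro k
        by_contra hcon
        push Not at hcon
        apply hC
        apply (Set.finite_Iio k).subset
        intro s hs
        by_contra h2
        have := hcon s (by simpa using h2)
        simp at hs
        omega
      choose g hg using hinf
      apply ((Set.finite_Iio x).biUnion (t := fun k => Set.Iic (g k)) (fun k _ => Set.finite_Iic _)).subset
      rintro p ⟨k, hk, hkp, hu⟩
      simp only [Set.mem_iUnion]
      refine ⟨k, ?_, ?_⟩
      · have := Nat.ge_two_pow_of_testBit hk
        exact lt_of_lt_of_le (Nat.lt_two_pow_self) this
      · by_contra h2
        simp at h2
        have := hu (g k) (hg k).1 h2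
        have := (hg k).2
        omega

lemma testBit_iff {f j x} (h : canon f j x) (k : ℕ) :
    x.testBit k = true ↔ k ∈ gen f j x ∧ ∀ k', k = k' + 1 → k' ∈ gen f j x → f k' ≤ j := by
  constructor
  · intro hk
    refine ⟨⟨k, hk, le_rfl, fun u h1 h2 => by omega⟩, ?_⟩
    rintro k' rfl ⟨k2, hk2, h3, h4⟩
    obtain ⟨u, h5, h6, h7⟩ := (h _ hk).2 k2 (by omega) hk2
    by_cases hu : u = k'
    · exact hu ▸ h7
    · have := h4 u h5 (by omega)
      omega
  · rintro ⟨⟨k0, h1, h2, h3⟩, h4⟩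
    by_cases hk : k0 = k
    · exact hk ▸ h1
    · obtain ⟨k', rfl⟩ : ∃ k', k = k' + 1 := ⟨k - 1, by omega⟩
      have h5 := h4 k' rfl ⟨k0, h1, by omega, fun u a b => h3 u a (by omega)⟩
      have := h3 k' (by omega) (by omega)
      omega

lemma gen_inj {f j x y} (hx : canon f j x) (hy : canon f j y) (h : gen f j x = gen f j y) : x = y := by
  apply Nat.eq_of_testBit_eq
  intro k
  rw [Bool.eq_iff_iff, testBit_iff hx, testBit_iff hy, h]

lemma exists_bits (K : Set ℕ) (hK : K.Finite) : ∃ x : ℕ, ∀ k, x.testBit k = true ↔ k ∈ K := by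
  refine ⟨∑ i ∈ hK.toFinset, 2 ^ i, fun k => ?_⟩
  rw [← Nat.mem_bitIndices]
  rw [← List.mem_toFinset, Finset.toFinset_bitIndices_sum_two_pow]
  simp

lemma ok_gen {f j A} (h : Ok f j A) : ∃ x, canon f j x ∧ gen f j x = A := by
  obtain ⟨h1, h2, h3⟩ := h
  have up : ∀ k ∈ A, ∀ p, k ≤ p → (∀ u, k ≤ u → u < p → j < f u) → p ∈ A := by
    intro k hk p hkp
    induction p, hkp using Nat.le_induction with
    | base => intro _; exact hk
    | succ p hp ih => 
      intro h
      exact h2 p (ih (fun u a b => h u a (by omega))) (h p hp (by omega))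
  have hK : {k | k ∈ A ∧ ∀ k', k = k' + 1 → k' ∈ A → f k' ≤ j}.Finite := by
    rcases h3 with h3 | h3
    · exact h3.subset (fun k hk => hk.1)
    · obtain ⟨M, hM⟩ := h3.bddAbove
      have hM' : ∀ u, M < u → j < f u := by
        intro u hu
        by_contra hc
        have := hM (show u ∈ {s | f s ≤ j} by simpa using hc)
        omega
      by_cases hA : ∃ k0 ∈ A, M < k0
      · obtain ⟨k0, hk0, hk0M⟩ := hA
        apply (Set.finite_Iic k0).subset
        rintro k ⟨hk, hk'⟩
        by_contra hc
        simp at hc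
        obtain ⟨k', rfl⟩ : ∃ k', k = k' + 1 := ⟨k - 1, by omega⟩
        have := hk' k' rfl (up k0 hk0 k' (by omega) (fun u a b => hM' u (by omega)))
        have := hM' k' (by omega)
        omega
      · push Not at hA
        exact (Set.finite_Iic M).subset (fun k hk => hA k hk.1)
  obtain ⟨x, hx⟩ := exists_bits _ hK
  refine ⟨x, ?_, ?_⟩
  · intro k hk
    rw [hx] at hk
    refine ⟨h1 _ hk.1, fun k' hk' hb => ?_⟩
    rw [hx] at hb
    by_contra hc
    push Not at hc
    obtain ⟨k2, rfl⟩ : ∃ k', k = k' + 1 := ⟨k - 1, by omega⟩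
    have := hk.2 k2 rfl (up k' hb.1 k2 (by omega) (fun u a b => hc u a (by omega)))
    have := hc k2 (by omega) (by omega)
    omega
  · ext p
    constructor
    · rintro ⟨k, hk, hkp, hu⟩
      rw [hx] at hk
      exact up k hk.1 p hkp hu
    · intro hp
      induction p with
      | zero => exact ⟨0, by rw [hx]; exact ⟨hp, fun k' h => by omega⟩, le_rfl, fun u a b => by omega⟩
      | succ p ih =>
        by_cases hc : p + 1 ∈ {k | k ∈ A ∧ ∀ k', k = k' + 1 → k' ∈ A → f k' ≤ j}
        · exact ⟨p + 1, (hx _).2 hc, le_rfl, fun u a b => by omega⟩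
        · simp only [Set.mem_setOf_eq, not_and, not_forall] at hc
          obtain ⟨k', e, hk', hf⟩ := hc hp
          obtain rfl : p = k' := by omega
          obtain ⟨k, a, b, c⟩ := ih hk'
          refine ⟨k, a, by omega, fun u h5 h6 => ?_⟩
          by_cases hu : u = p
          · subst hu; omega
          · exact c u h5 (by omega)

end Lat


namespace Lat

variable {m : ℕ → ℕ → ℕ}

lemma S_th (m : ℕ → ℕ → ℕ) (e : ℕ) : S m (Nat.pair e 0 + 2) = {Pt.th e} := by
  simp [S]

lemma S_el (m : ℕ → ℕ → ℕ) (e j x : ℕ) (h : canon (m e) j x) :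
    S m (Nat.pair e (Nat.pair j x + 1) + 2) = El e j (gen (m e) j x) := by
  simp [S, h]

lemma S_junk (m : ℕ → ℕ → ℕ) (e j x : ℕ) (h : ¬ canon (m e) j x) :
    S m (Nat.pair e (Nat.pair j x + 1) + 2) = {Pt.junk (Nat.pair e (Nat.pair j x + 1) + 2)} := by
  simp [S, h]

lemma num_cases (n : ℕ) : n = 0 ∨ n = 1 ∨ (∃ e, n = Nat.pair e 0 + 2) ∨
    ∃ e j x, n = Nat.pair e (Nat.pair j x + 1) + 2 := by
  match n with
  | 0 => simp
  | 1 => simp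
  | n + 2 =>
    right; right
    rcases h : n.unpair.2 with _ | y
    · left; exact ⟨n.unpair.1, by rw [← h, Nat.pair_unpair]⟩
    · right; exact ⟨n.unpair.1, y.unpair.1, y.unpair.2, by rw [Nat.pair_unpair, ← h, Nat.pair_unpair]⟩

lemma El_inj {e j A e' j' A'} (h : El e j A = El e' j' A') : e = e' ∧ j = j' ∧ A = A' := by
  have h1 : e = e' := by
    have := Set.ext_iff.1 h (Pt.th e); simpa using this
  subst h1
  have h2 : j = j' := by
    have h3 := Set.ext_iff.1 h (Pt.pi e j)
    have h4 := Set.ext_iff.1 h (Pt.pi e j')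
    simp at h3 h4
    omega
  refine ⟨rfl, h2, ?_⟩
  ext p
  have := Set.ext_iff.1 h (Pt.z e p)
  simpa using this

lemma S_inj (m : ℕ → ℕ → ℕ) : Function.Injective (S m) := by
  have h0 : S m 0 = Set.univ := rfl
  have h1 : S m 1 = ∅ := rfl
  have key : ∀ a b, S m a = S m b → (∀ e j x, b = Nat.pair e (Nat.pair j x + 1) + 2 →
      ∃ e j x, a = Nat.pair e (Nat.pair j x + 1) + 2) → a = b := by
    intro a b h hh
    rcases num_cases a with rfl | rfl | ⟨e, rfl⟩ | ⟨e, j, x, rfl⟩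
    · rcases num_cases b with rfl | rfl | ⟨e', rfl⟩ | ⟨e', j', x', rfl⟩
      · rfl
      · exact absurd (h ▸ Set.mem_univ (Pt.th 0) : Pt.th 0 ∈ S m 1) (by simp [h1])
      · have := Set.ext_iff.1 h (Pt.junk 0); simp [h0, S_th] at this
      · obtain ⟨_, _, _, h⟩ := hh _ _ _ rfl
        omega
    · rcases num_cases b with rfl | rfl | ⟨e', rfl⟩ | ⟨e', j', x', rfl⟩
      · exact absurd (h ▸ Set.mem_univ (Pt.th 0) : Pt.th 0 ∈ S m 1) (by simp [h1])
      · rfl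
      · rw [h1, S_th] at h; exact absurd h.symm (by simp)
      · obtain ⟨_, _, _, h⟩ := hh _ _ _ rfl
        omega
    · rcases num_cases b with rfl | rfl | ⟨e', rfl⟩ | ⟨e', j', x', rfl⟩
      · have := Set.ext_iff.1 h (Pt.junk 0); simp [h0, S_th] at this
      · rw [h1, S_th] at h; exact absurd h (by simp)
      · rw [S_th, S_th] at h
        simp at h; rw [h]
      · obtain ⟨e1, j1, x1, h⟩ := hh _ _ _ rfl
        simp at h
    · by_cases hc : canon (m e) j x
      · rw [S_el _ _ _ _ hc] at h
        rcases num_cases b with rfl | rfl | ⟨e', rfl⟩ | ⟨e', j', x', rfl⟩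
        · have := Set.ext_iff.1 h (Pt.junk 0); simp [h0] at this
        · have := Set.ext_iff.1 h (Pt.th e); simp [h1] at this
        · have := Set.ext_iff.1 h (Pt.pi e (j + 1)); simp [S_th] at this
        · by_cases hc' : canon (m e') j' x'
          · rw [S_el _ _ _ _ hc'] at h
            obtain ⟨rfl, rfl, h⟩ := El_inj h
            rw [gen_inj hc hc' h]
          · rw [S_junk _ _ _ _ hc'] at h
            have := Set.ext_iff.1 h (Pt.th e); simp at this
      · rw [S_junk _ _ _ _ hc] at h
        rcases num_cases b with rfl | rfl | ⟨e', rfl⟩ | ⟨e', j', x', rfl⟩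
        · have := Set.ext_iff.1 h (Pt.th 0); simp [h0] at this
        · exact absurd h (by simp [h1])
        · have := Set.ext_iff.1 h (Pt.th e'); simp [S_th] at this
        · by_cases hc' : canon (m e') j' x'
          · rw [S_el _ _ _ _ hc'] at h
            have := Set.ext_iff.1 h (Pt.th e'); simp at this
          · rw [S_junk _ _ _ _ hc'] at h
            simpa using h
  intro a b h
  by_cases ha : ∃ e j x, a = Nat.pair e (Nat.pair j x + 1) + 2
  · exact key a b h (fun _ _ _ _ => ha)
  · exact (key b a h.symm (fun e j x h => absurd ⟨e, j, x, h⟩ ha)).symm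

/-- classification of the sets -/
lemma S_cases (m : ℕ → ℕ → ℕ) (n : ℕ) : S m n = Set.univ ∨ S m n = ∅ ∨ (∃ e, S m n = {Pt.th e}) ∨
    (∃ e j A, Ok (m e) j A ∧ S m n = El e j A) ∨ S m n = {Pt.junk n} := by
  rcases num_cases n with rfl | rfl | ⟨e, rfl⟩ | ⟨e, j, x, rfl⟩
  · left; rfl
  · right; left; rfl
  · right; right; left; exact ⟨e, S_th m e⟩
  · right; right; right
    by_cases h : canon (m e) j x
    · left; exact ⟨e, j, _, gen_ok h, S_el m e j x h⟩
    · right; exact S_junk m e j x h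

lemma S_of_ok (e j A) (h : Ok (m e) j A) : ∃ n, S m n = El e j A := by
  obtain ⟨x, hx, rfl⟩ := ok_gen h
  exact ⟨_, S_el m e j x hx⟩

lemma El_disj {e j A e' j' A'} (h : e ≠ e') : El e j A ∩ El e' j' A' = ∅ := by
  ext P
  cases P <;> simp <;> intros <;> subst_vars <;> simp_all

/-- trichotomy for families -/
lemma fam_cases (B : Set (Set Pt)) (hB : B ⊆ Set.range (S m)) :
    (∃ X ∈ B, X.Finite) ∨ (∃ X ∈ B, ∃ Y ∈ B, X ∩ Y = ∅) ∨ (∀ X ∈ B, X = Set.univ) ∨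
    ∃ e, (∃ j A, Ok (m e) j A ∧ El e j A ∈ B) ∧
      ∀ X ∈ B, X = Set.univ ∨ ∃ j A, Ok (m e) j A ∧ X = El e j A := by
  by_cases h1 : ∃ X ∈ B, X.Finite
  · exact Or.inl h1
  right
  by_cases h2 : ∃ X ∈ B, ∃ Y ∈ B, X ∩ Y = ∅
  · exact Or.inl h2
  right
  by_cases h3 : ∀ X ∈ B, X = Set.univ
  · exact Or.inl h3
  right
  push Not at h1 h2 h3
  have hc : ∀ X ∈ B, X = Set.univ ∨ ∃ e j A, Ok (m e) j A ∧ X = El e j A := by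
    intro X hX
    have h5 := h1 X hX
    obtain ⟨n, rfl⟩ := hB hX
    rcases S_cases m n with h | h | ⟨e, h⟩ | h | h
    · exact Or.inl h
    · rw [h] at h5; simp at h5
    · rw [h] at h5; simp at h5
    · exact Or.inr h
    · rw [h] at h5; simp at h5
  obtain ⟨X, hX, hXu⟩ := h3
  obtain ⟨e, j, A, hok, rfl⟩ := (hc X hX).resolve_left hXu
  refine ⟨e, ⟨j, A, hok, hX⟩, fun Y hY => ?_⟩
  rcases hc Y hY with h | ⟨e', j', A', h, rfl⟩
  · exact Or.inl h
  · right
    by_cases he : e = e'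
    · subst he; exact ⟨j', A', h, rfl⟩
    · exact absurd (El_disj he) (h2 _ hX _ hY).ne_empty

lemma inter_mem (B : Set (Set Pt)) (hB : B ⊆ Set.range (S m)) : ∃ n, S m n = ⋂₀ B := by
  have hsub : ∀ (X : Set Pt) (P : Pt), X ∈ B → X = {P} → ∃ n, S m n = ⋂₀ B := by
    intro X P hX hXP
    by_cases hP : P ∈ ⋂₀ B
    · obtain ⟨n, hn⟩ := hB hX
      refine ⟨n, ?_⟩
      rw [hn]
      apply Set.Subset.antisymm
      · rw [hXP]; simpa using hP
      · exact Set.sInter_subset_of_mem hX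
    · refine ⟨1, ?_⟩
      symm
      apply Set.eq_empty_of_forall_notMem
      intro Q hQ
      have : Q ∈ X := hQ X hX
      rw [hXP] at this
      rw [this] at hQ
      exact hP hQ
  rcases fam_cases B hB with ⟨X, hX, hf⟩ | ⟨X, hX, Y, hY, hd⟩ | h | ⟨e, ⟨j0, A0, hok0, h0⟩, h⟩
  · obtain ⟨n, hn⟩ := hB hX
    rcases S_cases m n with h | h | ⟨e, h⟩ | ⟨e, j, A, -, h⟩ | h
    · exfalso
      rw [← hn, h] at hf
      refine Set.not_infinite.2 hf ((Set.infinite_range_of_injective (f := Pt.th) ?_).mono (Set.subset_univ _))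
      intro a b h; injection h
    · refine ⟨1, ?_⟩
      symm
      apply Set.eq_empty_of_forall_notMem
      intro Q hQ
      have : Q ∈ X := hQ X hX
      rw [← hn, h] at this
      exact this
    · exact hsub X _ hX (hn ▸ h)
    · exfalso
      rw [← hn, h] at hf
      refine Set.not_infinite.2 hf ((Set.infinite_range_of_injective (f := fun i => Pt.pi e (j + 1 + i)) ?_).mono ?_)
      · intro a b h; injection h; omega
      · rintro _ ⟨i, rfl⟩
        simp; omega
    · exact hsub X _ hX (hn ▸ h)
  · refine ⟨1, ?_⟩
    symm
    apply Set.eq_empty_of_forall_notMem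
    intro Q hQ
    have : Q ∈ X ∩ Y := ⟨hQ X hX, hQ Y hY⟩
    rw [hd] at this
    exact this
  · refine ⟨0, ?_⟩
    symm
    apply Set.eq_univ_of_forall
    intro Q X hX
    rw [h X hX]; trivial
  · by_cases hb : ∀ N, ∃ j A, Ok (m e) j A ∧ El e j A ∈ B ∧ N < j
    · refine ⟨_, (S_th m e).trans ?_⟩
      ext P
      simp only [Set.mem_singleton_iff, Set.mem_sInter]
      constructor
      · rintro rfl X hX
        rcases h X hX with rfl | ⟨j, A, -, rfl⟩ <;> simp
      · intro hP
        cases P with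
        | th e' => have := hP _ h0; simp at this; rw [this]
        | junk => have := hP _ h0; simp at this
        | pi e' i =>
          obtain ⟨j, A, _, h1, h2⟩ := hb i
          have := hP _ h1; simp at this; omega
        | z e' p =>
          obtain ⟨j, A, hok, h1, h2⟩ := hb p
          have := hP _ h1; simp at this
          have := hok.1 p this.2
          omega
    · push Not at hb
      obtain ⟨N, hN⟩ := hb
      classical
      have hex : ∃ d, ∃ j A, Ok (m e) j A ∧ El e j A ∈ B ∧ d + j = N := 
        ⟨N - j0, j0, A0, hok0, h0, by have := hN j0 A0 hok0 h0; omega⟩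
      obtain ⟨J, AJ, hokJ, hJ, hd⟩ := Nat.find_spec hex
      have hmax : ∀ j A, Ok (m e) j A → El e j A ∈ B → j ≤ J := by
        intro j A hok hj
        by_contra hc
        have hle := hN j A hok hj
        exact Nat.find_min hex (m := N - j) (by omega) ⟨j, A, hok, hj, by omega⟩
      have hA : Ok (m e) J {p | ∀ j A, Ok (m e) j A → El e j A ∈ B → p ∈ A} := by
        refine ⟨fun p hp => hokJ.1 p (hp J AJ hokJ hJ), fun p hp hlt j A hok hj => ?_, ?_⟩
        · exact hok.2.1 p (hp j A hok hj) (lt_of_le_of_lt (hmax j A hok hj) hlt)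
        · exact hokJ.2.2.imp (fun hf => hf.subset (fun p hp => hp J AJ hokJ hJ)) id
      obtain ⟨n, hn⟩ := S_of_ok (m := m) _ _ _ hA
      refine ⟨n, hn.trans ?_⟩
      ext P
      simp only [Set.mem_sInter]
      constructor
      · intro hP X hX
        rcases h X hX with rfl | ⟨j, A, hok, rfl⟩
        · trivial
        · cases P with
          | th e' => simpa using hP
          | junk => simp at hP
          | pi e' i => simp at hP ⊢; have := hmax j A hok hX; omega
          | z e' p => simp at hP ⊢; exact ⟨hP.1, hP.2 j A hok hX⟩
      · intro hP
        cases P with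
        | th e' => simpa using hP _ h0
        | junk => simpa using hP _ h0
        | pi e' i => simpa using hP _ hJ
        | z e' p => 
          have := hP _ hJ
          simp at this ⊢
          refine ⟨this.1, fun j A hok hj => ?_⟩
          have := hP _ hj
          simp at this
          exact this.2

def Cpt (m : ℕ → ℕ → ℕ) (X : Set Pt) : Prop :=
  ∀ B ⊆ Set.range (S m), ⋂₀ B ⊆ X → ∃ B' ⊆ B, B'.Finite ∧ ⋂₀ B' ⊆ X

lemma cpt_key {B : Set (Set Pt)} {X X0 : Set Pt} (h0 : X0 ∈ B) (hf : (X0 \ X).Finite) (h : ⋂₀ B ⊆ X) :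
    ∃ B' ⊆ B, B'.Finite ∧ ⋂₀ B' ⊆ X := by
  have h1 : ∀ P, ∃ Y ∈ B, P ∉ X → P ∉ Y := by
    intro P
    by_cases hP : P ∈ X
    · exact ⟨X0, h0, fun h => absurd hP h⟩
    · have : P ∉ ⋂₀ B := fun h2 => hP (h h2)
      simp only [Set.mem_sInter, not_forall] at this
      obtain ⟨Y, hY, hPY⟩ := this
      exact ⟨Y, hY, fun _ => hPY⟩
  choose g hg1 hg2 using h1
  refine ⟨insert X0 (g '' (X0 \ X)), ?_, (hf.image g).insert _, ?_⟩
  · rintro Y (rfl | ⟨P, _, rfl⟩)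
    · exact h0
    · exact hg1 P
  · intro P hP
    by_contra hc
    have h2 : P ∈ X0 := hP X0 (Or.inl rfl)
    exact hg2 P hc (hP (g P) (Or.inr ⟨P, ⟨h2, hc⟩, rfl⟩))

lemma cpt_of (X : Set Pt) (H : ∀ B ⊆ Set.range (S m), ⋂₀ B ⊆ X →
      ∀ e, (∃ j A, Ok (m e) j A ∧ El e j A ∈ B) → 
      (∀ X ∈ B, X = Set.univ ∨ ∃ j A, Ok (m e) j A ∧ X = El e j A) → Pt.th e ∈ X → ∃ Y ∈ B, (Y \ X).Finite) : 
    Cpt m X := by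
  intro B hB hX
  rcases fam_cases B hB with ⟨Y, hY, hf⟩ | ⟨Y, hY, Z, hZ, hd⟩ | h | ⟨e, h1, h2⟩
  · exact cpt_key hY (hf.subset Set.sdiff_subset) hX
  · refine ⟨{Y, Z}, ?_, by simp, ?_⟩
    · rintro _ (rfl | rfl) <;> assumption
    · simp [hd]
  · refine ⟨∅, by simp, by simp, ?_⟩
    rw [show ⋂₀ (∅ : Set (Set Pt)) = ⋂₀ B from ?_]; exact hX
    simp only [Set.sInter_empty]
    symm
    rw [Set.sInter_eq_univ]; exact h
  · obtain ⟨Y, hY, hf⟩ := H B hB hX e h1 h2 (hX (by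
      intro Y hY
      rcases h2 Y hY with rfl | ⟨j, A, _, rfl⟩ <;> simp))
    exact cpt_key hY hf hX

lemma diff_fin {e j A j0 A0} (h : (A0 \ A).Finite) : (El e j0 A0 \ El e j A).Finite := by
  apply (((Set.finite_Iic j).image (Pt.pi e)).union (h.image (Pt.z e))).subset
  rintro P ⟨h1, h2⟩
  cases P with
  | th => simp at h1 h2; exact absurd h1 h2
  | junk => simp at h1
  | pi e' i =>
    simp at h1 h2
    obtain ⟨rfl, h1⟩ := h1
    left; exact ⟨i, by simpa using h2 rfl, rfl⟩
  | z e' p =>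
    simp at h1 h2
    obtain ⟨rfl, h1⟩ := h1
    right; exact ⟨p, ⟨h1, by simpa using h2⟩, rfl⟩

lemma cofin {f : ℕ → ℕ} {j A} (h : Ok f j A) (hC : {s | f s ≤ j}.Finite) (hA : A.Infinite) : Aᶜ.Finite := by
  obtain ⟨M, hM⟩ := hC.bddAbove
  obtain ⟨k, hk, hMk⟩ := hA.exists_gt M
  have : ∀ p, k ≤ p → p ∈ A := by
    intro p hp
    induction p, hp using Nat.le_induction with
    | base => exact hk
    | succ p hp ih =>
      apply h.2.1 p ih
      by_contra hc
      have := hM (show p ∈ {s | f s ≤ j} by simpa using hc)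
      omega
  apply (Set.finite_Iio k).subset
  intro p hp
  by_contra hc
  exact hp (this p (by simpa using hc))

lemma cpt_el {e j A} (hok : Ok (m e) j A) (h : A.Infinite ∨ {s | m e s ≤ j}.Infinite) : Cpt m (El e j A) := by
  apply cpt_of
  rintro B hB hX e' ⟨j0, A0, hok0, h0⟩ h2 he
  simp at he
  subst he
  by_cases hC : {s | m e' s ≤ j}.Finite
  · have hA := cofin hok hC (h.resolve_right (fun h => h hC))
    exact ⟨_, h0, diff_fin (hA.subset (fun p hp => hp.2))⟩
  · by_contra hcon
    push Not at hcon
    have : Pt.pi e' j ∈ ⋂₀ B := by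
      intro Y hY
      rcases h2 Y hY with rfl | ⟨j1, A1, hok1, rfl⟩
      · trivial
      · simp
        by_contra hc
        apply hcon _ hY
        apply diff_fin
        refine (hok1.2.2.resolve_right ?_).subset Set.sdiff_subset
        intro hf
        apply hC
        apply hf.subset
        intro s hs
        simp at hs ⊢
        omega
    have := hX this
    simp at this

lemma alg_el {e j A} (hok : Ok (m e) j A) (P : Pt) (hP : P ∉ El e j A) : 
    ∃ n, Cpt m (S m n) ∧ El e j A ⊆ S m n ∧ P ∉ S m n := by
  by_cases h : A.Infinite ∨ {s | m e s ≤ j}.Infinite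
  · obtain ⟨n, hn⟩ := S_of_ok (m := m) _ _ _ hok
    exact ⟨n, hn ▸ cpt_el hok h, hn ▸ subset_rfl, hn ▸ hP⟩
  · push Not at h
    obtain ⟨M, hM⟩ := h.2.bddAbove
    have hM' : ∀ u, M < u → j < m e u := by
        intro u hu
        by_contra hc
        have := hM (show u ∈ {s | m e s ≤ j} by simpa using hc)
        omega
    have main : ∀ k, M < k → j < k → P ∉ El e j (A ∪ Set.Ici k) →
        ∃ n, Cpt m (S m n) ∧ El e j A ⊆ S m n ∧ P ∉ S m n := by
      intro k hMk hjk hPk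
      have hok' : Ok (m e) j (A ∪ Set.Ici k) := by
        refine ⟨?_, ?_, Or.inr h.2⟩
        · rintro p (hp | hp)
          · exact hok.1 p hp
          · simp at hp; omega
        · rintro p (hp | hp) hlt
          · left; exact hok.2.1 p hp hlt
          · right; simp at hp ⊢; omega
      obtain ⟨n, hn⟩ := S_of_ok (m := m) _ _ _ hok'
      refine ⟨n, hn ▸ cpt_el hok' (Or.inl ((Set.Ici_infinite k).mono Set.subset_union_right)), hn ▸ ?_, hn ▸ hPk⟩
      intro Q hQ
      cases Q with
      | th => simpa using hQ
      | junk => simpa using hQ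
      | pi => simpa using hQ
      | z => simp at hQ ⊢; tauto
    cases P with
    | th => exact main (M + j + 1) (by omega) (by omega) (by simpa using hP)
    | junk => exact main (M + j + 1) (by omega) (by omega) (by simp)
    | pi => exact main (M + j + 1) (by omega) (by omega) (by simpa using hP)
    | z e' p => 
      refine main (M + j + p + 1) (by omega) (by omega) ?_
      simp at hP ⊢
      intro h
      exact hP h

lemma alg (x : ℕ) (P : Pt) (hP : P ∉ S m x) : 
    ∃ n, Cpt m (S m n) ∧ S m x ⊆ S m n ∧ P ∉ S m n := by
  rcases S_cases m x with h | h | ⟨e, h⟩ | ⟨e, j, A, hok, h⟩ | h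
  · exact ⟨x, by rw [h]; exact fun B _ _ => ⟨∅, by simp, by simp, by simp⟩, subset_rfl, hP⟩
  · exact ⟨x, by rw [h]; exact cpt_of _ (fun B _ _ e _ _ h => absurd h (by simp)), subset_rfl, hP⟩
  · have hok : ∀ i, Ok (m e) i ∅ := fun i => ⟨by simp, by simp, by simp⟩
    have main : ∀ i, P ∉ El e i ∅ → ∃ n, Cpt m (S m n) ∧ S m x ⊆ S m n ∧ P ∉ S m n := by
      intro i hi
      obtain ⟨n, h1, h2, h3⟩ := alg_el (hok i) P hi
      refine ⟨n, h1, ?_, h3⟩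
      rw [h]
      rintro _ rfl
      exact h2 (by simp)
    rw [h] at hP
    cases P with
    | th => exact main 0 (by simpa using hP)
    | junk => exact main 0 (by simp)
    | pi e i => exact main i (by simp)
    | z => exact main 0 (by simp)
  · rw [h] at hP ⊢; exact alg_el hok P hP
  · exact ⟨x, by rw [h]; exact cpt_of _ (fun B _ _ e _ _ h => absurd h (by simp)), subset_rfl, hP⟩

theorem lattice_of (r : ℕ → ℕ → Bool) (hc : Computable₂ r) (hr : ∀ i j, r i j = true ↔ S m j ⊆ S m i) :
    IsComputableAlgebraicLattice r := by
  have lub : ∀ A j, S m j = ⋂₀ (S m '' A) → RelIsLUB (RelOfBool r) A j := by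
    intro A j h
    constructor
    · intro x hx
      rw [RelOfBool, hr, h]
      exact Set.sInter_subset_of_mem ⟨x, hx, rfl⟩
    · intro k hk
      rw [RelOfBool, hr, h]
      rintro P hP _ ⟨x, hx, rfl⟩
      have := hk x hx
      rw [RelOfBool, hr] at this
      exact this hP
  have hex : ∀ A, ∃ j, S m j = ⋂₀ (S m '' A) := fun A => inter_mem _ (Set.image_subset_range _ _)
  have hanti : ∀ i j, RelOfBool r i j → RelOfBool r j i → i = j := by
    intro i j h1 h2
    rw [RelOfBool, hr] at h1 h2
    exact S_inj m (h2.antisymm h1)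
  have lub' : ∀ A j, RelIsLUB (RelOfBool r) A j → S m j = ⋂₀ (S m '' A) := by
    intro A j h
    obtain ⟨k, hk⟩ := hex A
    have h2 := lub A k hk
    rw [hanti j k (h.2 k h2.1) (h2.2 j h.1), hk]
  have cpt : ∀ c, Cpt m (S m c) → RelIsCompact (RelOfBool r) c := by
    intro c hc A j hj hcj
    rw [RelOfBool, hr, lub' A j hj] at hcj
    obtain ⟨B', h1, h2, h3⟩ := hc _ (Set.image_subset_range _ _) hcj
    refine ⟨A ∩ S m ⁻¹' B', Set.inter_subset_left, (h2.preimage (S_inj m).injOn).subset Set.inter_subset_right, ?_⟩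
    obtain ⟨j', hj'⟩ := hex (A ∩ S m ⁻¹' B')
    refine ⟨j', lub _ _ hj', ?_⟩
    rw [RelOfBool, hr, hj']
    refine subset_trans ?_ h3
    apply Set.sInter_subset_sInter
    intro Y hY
    obtain ⟨x, hx, rfl⟩ := h1 hY
    exact ⟨x, ⟨hx, hY⟩, rfl⟩
  have htrans : ∀ i j k, RelOfBool r i j → RelOfBool r j k → RelOfBool r i k := by
    intro i j k h1 h2
    rw [RelOfBool, hr] at *
    exact h2.trans h1
  refine ⟨hc, ?_, ?_, ?_⟩
  · exact { refl := fun i => by rw [RelOfBool, hr], trans := htrans, antisymm := hanti }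
  · intro A
    refine ⟨(hex A).imp fun j hj => lub A j hj, ?_⟩
    obtain ⟨j, hj⟩ := hex {k | RelLowerBound (RelOfBool r) A k}
    have := lub _ _ hj
    exact ⟨j, fun x hx => this.2 x (fun k hk => hk x hx), fun k hk => this.1 k hk⟩
  · intro x
    refine ⟨fun c hc => hc.2, fun k hk => ?_⟩
    rw [RelOfBool, hr]
    intro P hP
    by_contra hc
    obtain ⟨n, h1, h2, h3⟩ := alg x P hc
    have := hk n ⟨cpt n h1, (hr _ _).2 h2⟩
    rw [RelOfBool, hr] at this
    exact h3 (this hP)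

end Lat


namespace Lat

variable {α β γ : Type} [Primcodable α] [Primcodable β] [Primcodable γ]

@[fun_prop] def Pr (f : α → β) : Prop := Primrec f
@[fun_prop] def PP (p : α → Prop) : Prop := PrimrecPred p

@[fun_prop] lemma Pr.id' : Pr (fun a : α => a) := Primrec.id
@[fun_prop] lemma Pr.const' (b : β) : Pr (fun _ : α => b) := Primrec.const b
@[fun_prop] lemma Pr.comp' {f : β → γ} {g : α → β} (hf : Pr f) (hg : Pr g) : Pr (fun a => f (g a)) :=
  Primrec.comp hf hg
@[fun_prop] lemma Pr.fst {f : α → β × γ} (hf : Pr f) : Pr (fun a => (f a).1) := Primrec.fst.comp hf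
@[fun_prop] lemma Pr.snd {f : α → β × γ} (hf : Pr f) : Pr (fun a => (f a).2) := Primrec.snd.comp hf
@[fun_prop] lemma Pr.mk {f : α → β} {g : α → γ} (hf : Pr f) (hg : Pr g) : Pr (fun a => (f a, g a)) :=
  Primrec.pair hf hg
@[fun_prop] lemma Pr.add {f g : α → ℕ} (hf : Pr f) (hg : Pr g) : Pr (fun a => f a + g a) :=
  Primrec.nat_add.comp hf hg
@[fun_prop] lemma Pr.sub {f g : α → ℕ} (hf : Pr f) (hg : Pr g) : Pr (fun a => f a - g a) :=
  Primrec.nat_sub.comp hf hg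
@[fun_prop] lemma Pr.mul {f g : α → ℕ} (hf : Pr f) (hg : Pr g) : Pr (fun a => f a * g a) :=
  Primrec.nat_mul.comp hf hg
@[fun_prop] lemma Pr.min {f g : α → ℕ} (hf : Pr f) (hg : Pr g) : Pr (fun a => min (f a) (g a)) :=
  Primrec.nat_min.comp hf hg
@[fun_prop] lemma Pr.unp {f : α → ℕ} (hf : Pr f) : Pr (fun a => Nat.unpair (f a)) :=
  Primrec.unpair.comp hf
@[fun_prop] lemma Pr.natpair {f g : α → ℕ} (hf : Pr f) (hg : Pr g) : Pr (fun a => Nat.pair (f a) (g a)) :=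
  Primrec₂.natPair.comp hf hg
lemma prim_two_pow : Primrec (fun n : ℕ => 2 ^ n) := by
  have : Primrec₂ (fun a b : ℕ => a ^ b) := by
    apply Primrec₂.unpaired'.1
    exact Nat.Primrec.pow
  exact this.comp (Primrec.const 2) Primrec.id
@[fun_prop] lemma Pr.two_pow {f : α → ℕ} (hf : Pr f) : Pr (fun a => 2 ^ (f a)) :=
  prim_two_pow.comp hf
@[fun_prop] lemma PP.comp' {p : β → Prop} {f : α → β} (hp : PP p) (hf : Pr f) : PP (fun a => p (f a)) :=
  PrimrecPred.comp hp hf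
@[fun_prop] lemma PP.and {p q : α → Prop} (hp : PP p) (hq : PP q) : PP (fun a => p a ∧ q a) :=
  PrimrecPred.and hp hq
@[fun_prop] lemma PP.or {p q : α → Prop} (hp : PP p) (hq : PP q) : PP (fun a => p a ∨ q a) :=
  PrimrecPred.or hp hq
@[fun_prop] lemma PP.not {p : α → Prop} (hp : PP p) : PP (fun a => ¬ p a) :=
  PrimrecPred.not hp
lemma PP.imp {p q : α → Prop} (hp : PP p) (hq : PP q) : PP (fun a => p a → q a) :=
  PrimrecPred.of_eq (PrimrecPred.or (PrimrecPred.not hp) hq) (fun a => by tauto)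
lemma PP.iff {p q : α → Prop} (hp : PP p) (hq : PP q) : PP (fun a => p a ↔ q a) :=
  PrimrecPred.of_eq (PrimrecPred.and (PP.imp hp hq) (PP.imp hq hp)) (fun a => by tauto)
attribute [fun_prop] PP.iff
@[fun_prop] lemma PP.eq {f g : α → ℕ} (hf : Pr f) (hg : Pr g) : PP (fun a => f a = g a) :=
  Primrec.eq.comp hf hg
@[fun_prop] lemma PP.eqo {f g : α → Option ℕ} (hf : Pr f) (hg : Pr g) : PP (fun a => f a = g a) :=
  Primrec.eq.comp hf hg
@[fun_prop] lemma PP.le {f g : α → ℕ} (hf : Pr f) (hg : Pr g) : PP (fun a => f a ≤ g a) :=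
  Primrec.nat_le.comp hf hg
@[fun_prop] lemma PP.lt {f g : α → ℕ} (hf : Pr f) (hg : Pr g) : PP (fun a => f a < g a) :=
  Primrec.nat_lt.comp hf hg

def exl (n : ℕ) (p : ℕ → Prop) : Prop := ∃ k < n, p k
def all (n : ℕ) (p : ℕ → Prop) : Prop := ∀ k < n, p k

@[fun_prop] lemma PP.exl {b : α → ℕ} {p : α → ℕ → Prop} (hb : Pr b) (hp : PP fun x : α × ℕ => p x.1 x.2) :
    PP (fun a => exl (b a) (p a)) := by
  have : PrimrecRel (fun (k : ℕ) (a : α) => p a k) := PrimrecPred.comp hp (Primrec.pair Primrec.snd Primrec.fst)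
  have h2 := (PrimrecRel.exists_mem_list this).comp (Primrec.list_range.comp (show Primrec b from hb)) (Primrec.id (α := α))
  refine PrimrecPred.of_eq h2 fun a => ?_
  show _ ↔ ∃ k < b a, p a k
  simp
@[fun_prop] lemma PP.all {b : α → ℕ} {p : α → ℕ → Prop} (hb : Pr b) (hp : PP fun x : α × ℕ => p x.1 x.2) :
    PP (fun a => all (b a) (p a)) := by
  have : PrimrecRel (fun (k : ℕ) (a : α) => p a k) := PrimrecPred.comp hp (Primrec.pair Primrec.snd Primrec.fst)
  have h2 := (PrimrecRel.forall_mem_list this).comp (Primrec.list_range.comp (show Primrec b from hb)) (Primrec.id (α := α))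
  refine PrimrecPred.of_eq h2 fun a => ?_
  show _ ↔ ∀ k < b a, p a k
  simp

def bit (x k : ℕ) : Prop := x.testBit k = true
@[fun_prop] lemma PP.bit {f g : α → ℕ} (hf : Pr f) (hg : Pr g) : PP (fun a => bit (f a) (g a)) := by
  have : PrimrecPred fun a => (f a / 2 ^ (g a)) % 2 = 1 :=
    Primrec.eq.comp (Primrec.nat_mod.comp (Primrec.nat_div.comp hf (prim_two_pow.comp hg)) (Primrec.const 2)) (Primrec.const 1)
  refine PrimrecPred.of_eq this fun a => ?_
  simp [Lat.bit, Nat.testBit_eq_decide_div_mod_eq]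

def genB (M : ℕ × ℕ → ℕ) (e j x p : ℕ) : Prop :=
  exl x fun k => bit x k ∧ k ≤ p ∧ all p fun u => u < k ∨ j < M (e, u)

def canonB (M : ℕ × ℕ → ℕ) (e j x : ℕ) : Prop :=
  all x fun k => ¬ bit x k ∨ (j < k ∧ all k fun k' => ¬ bit x k' ∨ exl k fun u => k' ≤ u ∧ M (e, u) ≤ j)

lemma bit_lt {x k : ℕ} (h : x.testBit k = true) : k < x :=
  lt_of_lt_of_le (Nat.lt_two_pow_self) (Nat.ge_two_pow_of_testBit h)

lemma genB_iff {M : ℕ × ℕ → ℕ} {e j x p : ℕ} : genB M e j x p ↔ p ∈ gen (fun u => M (e, u)) j x := by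
  constructor
  · rintro ⟨k, -, h1, h2, h3⟩
    exact ⟨k, h1, h2, fun u a b => (h3 u b).resolve_left (by omega)⟩
  · rintro ⟨k, h1, h2, h3⟩
    exact ⟨k, bit_lt h1, h1, h2, fun u b => by
      by_cases hu : u < k
      · exact Or.inl hu
      · exact Or.inr (h3 u (by omega) b)⟩

lemma canonB_iff {M : ℕ × ℕ → ℕ} {e j x : ℕ} : canonB M e j x ↔ canon (fun u => M (e, u)) j x := by
  constructor
  · intro h k hk
    obtain ⟨h1, h2⟩ := (h k (bit_lt hk)).resolve_left (fun h => h hk)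
    refine ⟨h1, fun k' hk' hb => ?_⟩
    obtain ⟨u, h3, h4, h5⟩ := (h2 k' hk').resolve_left (fun h => h hb)
    exact ⟨u, h4, h3, h5⟩
  · intro h k _
    by_cases hk : bit x k
    · right
      obtain ⟨h1, h2⟩ := h k hk
      refine ⟨h1, fun k' hk' => ?_⟩
      by_cases hb : bit x k'
      · right
        obtain ⟨u, h3, h4, h5⟩ := h2 k' hk' hb
        exact ⟨u, h4, h3, h5⟩
      · exact Or.inl hb
    · exact Or.inl hk

def ee (i : ℕ) : ℕ := (i - 2).unpair.1
def jj (i : ℕ) : ℕ := ((i - 2).unpair.2 - 1).unpair.1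
def xx (i : ℕ) : ℕ := ((i - 2).unpair.2 - 1).unpair.2
def isTh (i : ℕ) : Prop := 2 ≤ i ∧ (i - 2).unpair.2 = 0
def isEl (M : ℕ × ℕ → ℕ) (i : ℕ) : Prop := 2 ≤ i ∧ (¬ (i - 2).unpair.2 = 0) ∧ canonB M (ee i) (jj i) (xx i)

def Ord (M : ℕ × ℕ → ℕ) (i j : ℕ) : Prop :=
  i = 0 ∨ i = j ∨ j = 1 ∨ (isEl M i ∧ ee i = ee j ∧ (isTh j ∨ (isEl M j ∧ jj i ≤ jj j ∧
    all (xx j) fun k => ¬ bit (xx j) k ∨ genB M (ee i) (jj i) (xx i) k)))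

lemma Ord_prim (M : ℕ × ℕ → ℕ) (hM : Pr M) : PP (fun p : ℕ × ℕ => Ord M p.1 p.2) := by
  unfold Ord isEl isTh genB canonB ee jj xx
  fun_prop

lemma El_sub_iff {f : ℕ → ℕ} {e a x e' a' x' : ℕ} :
    El e' a' (gen f a' x') ⊆ El e a (gen f a x) ↔
      e = e' ∧ a ≤ a' ∧ ∀ k, x'.testBit k = true → k ∈ gen f a x := by
  constructor
  · intro h
    have h1 : e' = e := by simpa using h (show Pt.th e' ∈ _ by simp)
    subst h1
    refine ⟨rfl, ?_, ?_⟩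
    · have := h (show Pt.pi e' (a' + 1) ∈ _ by simp)
      simp at this; omega
    · intro k hk
      have := h (show Pt.z e' k ∈ _ from ⟨rfl, ⟨k, hk, le_rfl, fun u a b => by omega⟩⟩)
      simpa using this
  · rintro ⟨rfl, h1, h2⟩ P hP
    cases P with
    | th => simpa using hP
    | junk => simp at hP
    | pi => simp at hP ⊢; omega
    | z e' p =>
      simp at hP ⊢
      refine ⟨hP.1, ?_⟩
      obtain ⟨k, b1, b2, b3⟩ := hP.2
      obtain ⟨k0, c1, c2, c3⟩ := h2 k b1
      refine ⟨k0, c1, by omega, fun u d1 d2 => ?_⟩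
      by_cases hu : u < k
      · exact c3 u d1 hu
      · have := b3 u (by omega) d2; omega

lemma Ord_iff (M : ℕ × ℕ → ℕ) (i j : ℕ) :
    Ord M i j ↔ S (fun e u => M (e, u)) j ⊆ S (fun e u => M (e, u)) i := by
  have h0 : S (fun e u => M (e, u)) 0 = Set.univ := rfl
  have h1 : S (fun e u => M (e, u)) 1 = ∅ := rfl
  have hemp : ∀ j, S (fun e u => M (e, u)) j = ∅ ↔ j = 1 := fun j => by
    rw [← h1]; exact (S_inj _).eq_iff
  have hsing : ∀ i P, S (fun e u => M (e, u)) i = {P} → ¬ isEl M i → i ≠ 0 →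
      (Ord M i j ↔ S (fun e u => M (e, u)) j ⊆ S (fun e u => M (e, u)) i) := by
    intro i P hP hi hi0
    have : S (fun e u => M (e, u)) j ⊆ S (fun e u => M (e, u)) i ↔ j = 1 ∨ j = i := by
      conv_lhs => rw [hP]
      rw [Set.subset_singleton_iff_eq, ← hP, hemp, (S_inj _).eq_iff]
    rw [this]
    unfold Ord
    constructor
    · rintro (h | h | h | h)
      · exact absurd h hi0
      · exact Or.inr h.symm
      · exact Or.inl h
      · exact absurd h.1 hi
    · rintro (h | h)
      · exact Or.inr (Or.inr (Or.inl h))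
      · exact Or.inr (Or.inl h.symm)
  rcases num_cases i with rfl | rfl | ⟨e, rfl⟩ | ⟨e, a, x, rfl⟩
  · simp [Ord, h0]
  · rw [h1, Set.subset_empty_iff, hemp]
    constructor
    · rintro (h | h | h | h)
      · omega
      · omega
      · omega
      · exact absurd h.1.1 (by omega)
    · rintro rfl; right; left; rfl
  · exact hsing _ _ (S_th _ e) (by simp [isEl]) (by omega)
  · by_cases hc : canon (fun u => M (e, u)) a x
    · have hel : isEl M (Nat.pair e (Nat.pair a x + 1) + 2) := by
        simp [isEl, ee, jj, xx, canonB_iff, hc]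
      rw [S_el (fun e u => M (e, u)) _ _ _ hc]
      rcases num_cases j with rfl | rfl | ⟨e', rfl⟩ | ⟨e', a', x', rfl⟩
      · constructor
        · simp [Ord, isTh, isEl]
        · intro h; have := h (Set.mem_univ (Pt.junk 0)); simp at this
      · simp [Ord, h1]
      · rw [S_th]
        have hel' : ¬ isEl M (Nat.pair e' 0 + 2) := by simp [isEl]
        simp only [Ord, hel, isTh, hel', ee]
        simp
        tauto
      · by_cases hc' : canon (fun u => M (e', u)) a' x'
        · have hel' : isEl M (Nat.pair e' (Nat.pair a' x' + 1) + 2) := by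
            simp [isEl, ee, jj, xx, canonB_iff, hc']
          rw [S_el (fun e u => M (e, u)) _ _ _ hc']
          by_cases he : e = e'
          · subst he
            rw [El_sub_iff]
            constructor
            · rintro (h | h | h | h)
              · omega
              · simp at h
                obtain ⟨rfl, rfl⟩ := h
                exact ⟨rfl, le_rfl, fun k hk => ⟨k, hk, le_rfl, fun u a b => by omega⟩⟩
              · omega
              · obtain ⟨-, -, h | ⟨-, h2, h3⟩⟩ := h
                · simp [isTh] at h
                · simp [jj, xx, ee, genB_iff] at h2 h3
                  exact ⟨rfl, h2, fun k hk => (h3 k (bit_lt hk)).resolve_left (fun h => h hk)⟩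
            · rintro ⟨-, h2, h3⟩
              refine Or.inr (Or.inr (Or.inr ⟨hel, by simp [ee], Or.inr ⟨hel', by simpa [jj] using h2, ?_⟩⟩))
              simp only [jj, xx, ee, genB_iff]
              intro k _
              by_cases hk : bit x' k
              · right; simpa using h3 k hk
              · left; simpa using hk
          · constructor
            · simp [Ord, hel, isTh, ee, he]
            · intro h
              have := h (show Pt.th e' ∈ _ by simp)
              simp at this
              exact absurd this.symm he
        · rw [S_junk (fun e u => M (e, u)) _ _ _ hc']
          have hel' : ¬ isEl M (Nat.pair e' (Nat.pair a' x' + 1) + 2) := by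
            simp [isEl, ee, jj, xx, canonB_iff, hc']
          constructor
          · simp only [Ord, hel', isTh]
            simp
            rintro rfl rfl rfl
            exact absurd hc hc'
          · intro h; have := h (Set.mem_singleton _); simp at this
    · refine hsing _ _ (S_junk _ _ _ _ hc) ?_ (by omega)
      simp [isEl, ee, jj, xx, canonB_iff, hc]

end Lat


namespace Lat

open Nat.Partrec (Code)

section prim
variable {α β γ : Type} [Primcodable α] [Primcodable β] [Primcodable γ]

def V (s e y q : ℕ) : Option ℕ := Code.evaln s (Denumerable.ofNat Code e) (Nat.pair y q)

@[fun_prop] lemma Pr.V {f1 f2 f3 f4 : α → ℕ} (h1 : Pr f1) (h2 : Pr f2) (h3 : Pr f3) (h4 : Pr f4) :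
    Pr (fun a => V (f1 a) (f2 a) (f3 a) (f4 a)) := by
  exact Code.primrec_evaln.comp (Primrec.pair (Primrec.pair h1 ((Primrec.ofNat Code).comp h2))
    (Primrec₂.natPair.comp h3 h4))

@[fun_prop] lemma Pr.getD {f : α → List ℕ} {g : α → ℕ} (hf : Pr f) (hg : Pr g) :
    Pr (fun a => (f a).getD (g a) 0) := (Primrec.list_getD 0).comp hf hg
@[fun_prop] lemma Pr.length {f : α → List ℕ} (hf : Pr f) :
    Pr (fun a => (f a).length) := Primrec.list_length.comp hf

open Classical in
noncomputable def fg (n : ℕ) (p : ℕ → Prop) : ℕ := Nat.findGreatest p n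

@[fun_prop] lemma Pr.fg {b : α → ℕ} {p : α → ℕ → Prop} (hb : Pr b) (hp : PP fun x : α × ℕ => p x.1 x.2) :
    Pr (fun a => fg (b a) (p a)) := by
  classical
  exact (Primrec.nat_findGreatest hb hp).of_eq (fun a => by unfold Lat.fg; congr)

lemma fg_spec {n : ℕ} {p : ℕ → Prop} {k : ℕ} (hk : k ≤ n) (h : p k) : p (fg n p) := by
  classical
  have := Nat.findGreatest_spec (P := p) hk h
  unfold fg; convert this

lemma fg_le {n : ℕ} {p : ℕ → Prop} {k : ℕ} (hk : k ≤ n) (h : p k) : k ≤ fg n p := by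
  classical
  have := Nat.le_findGreatest (P := p) hk h
  unfold fg; convert this

lemma fg_le_n {n : ℕ} {p : ℕ → Prop} : fg n p ≤ n := by
  classical
  unfold fg; exact Nat.findGreatest_le _

lemma fg_pos {n : ℕ} {p : ℕ → Prop} (h : fg n p ≠ 0) : p (fg n p) := by
  classical
  exact Nat.findGreatest_of_ne_zero rfl h

end prim

def cZ (e τ : ℕ) : ℕ := Nat.pair e (Nat.pair (τ - 1) (2 ^ τ) + 1) + 2
def cY (e σ x : ℕ) : ℕ := Nat.pair e (Nat.pair σ x + 1) + 2

def ga (h : List ℕ) (u : ℕ) : ℕ := (h.getD u 0).unpair.1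
def gv (h : List ℕ) (u : ℕ) : ℕ := (h.getD u 0).unpair.2.unpair.1
def gi (h : List ℕ) (u : ℕ) : ℕ := min 1 u * (h.getD (u - 1) 0).unpair.2.unpair.2

def aliveH (h : List ℕ) (τ : ℕ) : Prop := all h.length fun u => u < τ ∨ τ ≤ ga h u
def ownH (h : List ℕ) (σ u : ℕ) : Prop := σ ≤ u ∧ ga h u = σ
def phH (h : List ℕ) (σ a : ℕ) : Prop :=
  ownH h σ a ∧ gv h a = 0 ∧ all h.length fun u => u ≤ a ∨ ¬ ownH h σ u
def wantBH (e : ℕ) (h : List ℕ) (σ : ℕ) : Prop :=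
  (¬ exl h.length fun a => phH h σ a) ∧ exl (h.length + 1) fun τ => σ < τ ∧ aliveH h τ ∧
    all h.length fun u => ¬ ownH h σ u ∨ gv h u = 0 ∨ V h.length e (2 * cZ e τ) (gv h u - 1) = some 1
def wantAH (e : ℕ) (h : List ℕ) (σ q : ℕ) : Prop :=
  exl h.length fun a => phH h σ a ∧ exl (2 ^ (h.length + 2)) fun x =>
    (all (h.length + 2) fun k => bit x k ↔ ((k < a ∧ ownH h σ k ∧ gv h k = 0) ∨ k = a + 1)) ∧
    V h.length e (2 * cY e σ x) q = some 1 ∧ V h.length e (2 * cZ e a) q = some 0 ∧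
    V h.length e (2 * gi h σ + 1) q = some 1
def wantH (e : ℕ) (h : List ℕ) (σ v : ℕ) : Prop :=
  aliveH h σ ∧ ((v = 0 ∧ wantBH e h σ) ∨ (1 ≤ v ∧ wantAH e h σ (v - 1)))

noncomputable def actH (e : ℕ) (h : List ℕ) : ℕ :=
  h.length + 1 - fg (h.length + 1) fun d => 1 ≤ d ∧ exl (h.length + 2) fun v => wantH e h (h.length + 1 - d) v
noncomputable def valH (e : ℕ) (h : List ℕ) : ℕ :=
  fg (h.length + 1) fun v => wantH e h (actH e h) v
noncomputable def step (e : ℕ) (h : List ℕ) : ℕ :=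
  Nat.pair (actH e h) (Nat.pair (valH e h) (gi h (min (actH e h) h.length) + 1))

section prim2
variable {α : Type} [Primcodable α]

@[fun_prop] lemma PP.wantH {f1 : α → ℕ} {f2 : α → List ℕ} {f3 f4 : α → ℕ} (h1 : Pr f1) (h2 : Pr f2)
    (h3 : Pr f3) (h4 : Pr f4) : PP (fun a => wantH (f1 a) (f2 a) (f3 a) (f4 a)) := by
  unfold Lat.wantH wantAH wantBH phH ownH aliveH ga gv gi cZ cY
  fun_prop

@[fun_prop] lemma Pr.actH {f1 : α → ℕ} {f2 : α → List ℕ} (h1 : Pr f1) (h2 : Pr f2) :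
    Pr (fun a => actH (f1 a) (f2 a)) := by
  unfold Lat.actH
  fun_prop

@[fun_prop] lemma Pr.step {f1 : α → ℕ} {f2 : α → List ℕ} (h1 : Pr f1) (h2 : Pr f2) :
    Pr (fun a => step (f1 a) (f2 a)) := by
  unfold Lat.step valH gi
  fun_prop

end prim2

noncomputable def hist (e : ℕ) : ℕ → List ℕ
  | 0 => []
  | s + 1 => hist e s ++ [step e (hist e s)]

noncomputable def W (e s : ℕ) : ℕ := step e (hist e s)

lemma hist_eq (e s : ℕ) : hist e s = (List.range s).map (W e) := by
  induction s with
  | zero => rfl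
  | succ s ih =>
    rw [List.range_succ, List.map_append, ← ih]; rfl

lemma W_prim : Pr (fun p : ℕ × ℕ => W p.1 p.2) := by
  refine Primrec.nat_strong_rec W (g := fun e h => some (step e h)) ?_ ?_
  · have : Pr (fun p : ℕ × List ℕ => step p.1 p.2) := by fun_prop
    exact Primrec.option_some.comp this
  · intro a n
    rw [← hist_eq]; rfl

noncomputable def act (e s : ℕ) : ℕ := (W e s).unpair.1
noncomputable def val (e s : ℕ) : ℕ := (W e s).unpair.2.unpair.1
noncomputable def idx (e s : ℕ) : ℕ := min 1 s * (W e (s - 1)).unpair.2.unpair.2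

lemma act_prim : Pr (fun p : ℕ × ℕ => act p.1 p.2) := by
  unfold act
  have := W_prim
  fun_prop

lemma len_hist (e s : ℕ) : (hist e s).length = s := by simp [hist_eq]
lemma getD_hist {e s u : ℕ} (h : u < s) : (hist e s).getD u 0 = W e u := by
  simp [hist_eq, h]
lemma ga_hist {e s u : ℕ} (h : u < s) : ga (hist e s) u = act e u := by
  rw [ga, getD_hist h, act]
lemma gv_hist {e s u : ℕ} (h : u < s) : gv (hist e s) u = val e u := by
  rw [gv, getD_hist h, val]
lemma gi_hist {e s u : ℕ} (h : u ≤ s) : gi (hist e s) u = idx e u := by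
  rcases Nat.eq_zero_or_pos u with rfl | hu
  · simp [gi, idx]
  · rw [gi, getD_hist (by omega), idx]

def Alive (e τ s : ℕ) : Prop := ∀ u < s, τ ≤ u → τ ≤ act e u
def Own (e σ u : ℕ) : Prop := σ ≤ u ∧ act e u = σ
def Ph (e σ a s : ℕ) : Prop := a < s ∧ Own e σ a ∧ val e a = 0 ∧ ∀ u, a < u → u < s → ¬ Own e σ u
def WantB (e s σ : ℕ) : Prop := (¬ ∃ a, Ph e σ a s) ∧ ∃ τ, τ ≤ s ∧ σ < τ ∧ Alive e τ s ∧
  ∀ u < s, Own e σ u → val e u ≠ 0 → V s e (2 * cZ e τ) (val e u - 1) = some 1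
def WantA (e s σ q : ℕ) : Prop := ∃ a, Ph e σ a s ∧ ∃ x,
  (∀ k, x.testBit k = true ↔ ((k < a ∧ Own e σ k ∧ val e k = 0) ∨ k = a + 1)) ∧
    V s e (2 * cY e σ x) q = some 1 ∧ V s e (2 * cZ e a) q = some 0 ∧
    V s e (2 * idx e σ + 1) q = some 1
def Want (e s σ v : ℕ) : Prop := Alive e σ s ∧ ((v = 0 ∧ WantB e s σ) ∨ (1 ≤ v ∧ WantA e s σ (v - 1)))

lemma own_iff {e s σ u : ℕ} (h : u < s) : ownH (hist e s) σ u ↔ Own e σ u := by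
  rw [ownH, ga_hist h, Own]

lemma alive_iff {e s τ : ℕ} : aliveH (hist e s) τ ↔ Alive e τ s := by
  unfold aliveH Alive all
  rw [len_hist]
  refine forall₂_congr fun u hu => ?_
  beta_reduce
  rw [ga_hist hu, or_iff_not_imp_left, not_lt]

lemma ph_iff {e s σ a : ℕ} (h : a < s) : phH (hist e s) σ a ↔ Ph e σ a s := by
  unfold phH Ph all
  rw [own_iff h, gv_hist h, len_hist]
  constructor
  · rintro ⟨h1, h2, h3⟩
    refine ⟨h, h1, h2, fun u a b => ?_⟩
    have := (h3 u b).resolve_left (by omega)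
    rwa [own_iff b] at this
  · rintro ⟨_, h1, h2, h3⟩
    refine ⟨h1, h2, fun u hu => ?_⟩
    beta_reduce
    rw [own_iff hu]
    by_cases hh : u ≤ a
    · exact Or.inl hh
    · exact Or.inr (h3 u (by omega) hu)

lemma wantB_iff {e s σ : ℕ} : wantBH e (hist e s) σ ↔ WantB e s σ := by
  unfold wantBH WantB
  rw [len_hist]
  refine and_congr (not_congr ⟨?_, ?_⟩) ⟨?_, ?_⟩
  · rintro ⟨a, h1, h2⟩; exact ⟨a, (ph_iff h1).1 h2⟩
  · rintro ⟨a, h⟩; exact ⟨a, h.1, (ph_iff h.1).2 h⟩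
  · rintro ⟨τ, h1, h2, h3, h4⟩
    refine ⟨τ, by omega, h2, alive_iff.1 h3, fun u hu ho hv => ?_⟩
    have := h4 u hu
    beta_reduce at this
    rw [own_iff hu, gv_hist hu] at this
    tauto
  · rintro ⟨τ, h1, h2, h3, h4⟩
    refine ⟨τ, by omega, h2, alive_iff.2 h3, fun u hu => ?_⟩
    have := h4 u hu
    beta_reduce
    rw [own_iff hu, gv_hist hu]
    tauto

lemma wantA_iff {e s σ q : ℕ} (hσ : σ ≤ s) : wantAH e (hist e s) σ q ↔ WantA e s σ q := by
  unfold wantAH WantA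
  rw [len_hist, gi_hist hσ]
  constructor
  · rintro ⟨a, h1, h2, x, h3, h4, h5⟩
    refine ⟨a, (ph_iff h1).1 h2, x, fun k => ?_, h5⟩
    by_cases hk : k < s + 2
    · refine (h4 k hk).trans (or_congr_left (and_congr_right fun hka => ?_))
      rw [own_iff (by omega), gv_hist (by omega)]
    · have : x.testBit k = false := Nat.testBit_lt_two_pow (lt_of_lt_of_le h3 (Nat.pow_le_pow_right (by omega) (by omega)))
      rw [this]
      simp
      omega
  · rintro ⟨a, h2, x, h4, h5⟩
    refine ⟨a, h2.1, (ph_iff h2.1).2 h2, x, ?_, fun k _ => ?_, h5⟩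
    · apply Nat.lt_pow_two_of_testBit
      intro i hi
      by_contra hc
      have := (h4 i).1 (by simpa using hc)
      have := h2.1
      omega
    · refine (h4 k).trans (or_congr_left (and_congr_right fun hka => ?_))
      have := h2.1
      rw [own_iff (by omega), gv_hist (by omega)]

lemma want_iff {e s σ v : ℕ} (hσ : σ ≤ s) : wantH e (hist e s) σ v ↔ Want e s σ v := by
  unfold wantH Want
  rw [alive_iff, wantB_iff, wantA_iff hσ]

lemma act_eq (e s : ℕ) : act e s = actH e (hist e s) := by simp [act, W, step]
lemma val_eq (e s : ℕ) : val e s = valH e (hist e s) := by simp [val, W, step]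

lemma idx_zero (e : ℕ) : idx e 0 = 0 := by simp [idx]
lemma idx_succ (e s : ℕ) : idx e (s + 1) = idx e (min (act e s) s) + 1 := by
  rw [← gi_hist (s := s) (min_le_right _ _), act_eq]
  simp [idx, W, step, len_hist]

/-- An action is wanted. -/
lemma act_spec {e s : ℕ} (h : act e s ≤ s) : Want e s (act e s) (val e s) := by
  have h1 := act_eq e s
  unfold actH at h1
  rw [len_hist] at h1
  have h2 := fg_pos (n := s + 1) (p := fun d => 1 ≤ d ∧ exl (s + 2) fun v => wantH e (hist e s) (s + 1 - d) v) (by omega)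
  rw [← h1] at h2
  obtain ⟨-, v, hv, h3⟩ := h2
  rw [← want_iff h, val_eq, valH, len_hist, ← act_eq]
  exact fg_spec (p := fun v => wantH e (hist e s) (act e s) v) (by omega) h3

lemma act_le {e s σ v : ℕ} (hσ : σ ≤ s) (hv : v ≤ s + 1) (h : Want e s σ v) : act e s ≤ σ := by
  have h1 := act_eq e s
  unfold actH at h1
  rw [len_hist] at h1
  have h2 := fg_le (n := s + 1) (k := s + 1 - σ) (p := fun d => 1 ≤ d ∧ exl (s + 2) fun v => wantH e (hist e s) (s + 1 - d) v) (by omega)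
    ⟨by omega, v, by omega, by rw [show s + 1 - (s + 1 - σ) = σ by omega]; exact (want_iff hσ).2 h⟩
  omega

lemma act_le_succ (e s : ℕ) : act e s ≤ s + 1 := by
  rw [act_eq, actH, len_hist]
  omega

end Lat


namespace Lat

open Filter

def True' (e σ : ℕ) : Prop := ∀ s, Alive e σ s

lemma canon_Z (e τ : ℕ) (h : 1 ≤ τ) : canon (act e) (τ - 1) (2 ^ τ) := by
  intro k hk
  rw [Nat.testBit_two_pow] at hk
  simp at hk
  subst hk
  refine ⟨by omega, fun k' hk' hb => ?_⟩
  rw [Nat.testBit_two_pow] at hb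
  simp at hb
  omega

lemma Own.want {e σ u : ℕ} (h : Own e σ u) : Want e u σ (val e u) := by
  have := act_spec (e := e) (s := u) (by rw [h.2]; exact h.1)
  rwa [h.2] at this

lemma Own.B {e σ u : ℕ} (h : Own e σ u) (hv : val e u = 0) : WantB e u σ := by
  rcases h.want.2 with h | h
  · exact h.2
  · omega

lemma Own.A {e σ u : ℕ} (h : Own e σ u) (hv : val e u ≠ 0) : WantA e u σ (val e u - 1) := by
  rcases h.want.2 with h | h
  · exact absurd h.1 hv
  · exact h.2

lemma Own.lt {e σ u : ℕ} (h : Own e σ u) (hv : val e u = 0) : σ < u := by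
  obtain ⟨-, τ, h1, h2, -⟩ := h.B hv
  omega

lemma canon_Y {e σ a x : ℕ} (ha : σ < a) 
    (hx : ∀ k, x.testBit k = true ↔ ((k < a ∧ Own e σ k ∧ val e k = 0) ∨ k = a + 1)) :
    canon (act e) σ x := by
  intro k hk
  rw [hx] at hk
  refine ⟨?_, fun k' hk' hb => ?_⟩
  · rcases hk with hk | hk
    · exact hk.2.1.lt hk.2.2
    · omega
  · rw [hx] at hb
    refine ⟨k', le_rfl, hk', ?_⟩
    rcases hb with hb | hb
    · exact hb.2.1.2.le
    · omega

structure Ctx (e : ℕ) (mem Em : ℕ → ℕ → Prop) : Prop where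
  V1 : ∀ n q, mem n q → ∀ᶠ s in atTop, V s e (2 * n) q = some 1
  V0 : ∀ n q, ¬ mem n q → ∀ᶠ s in atTop, V s e (2 * n) q = some 0
  E1 : ∀ i q, Em i q → ∀ᶠ s in atTop, V s e (2 * i + 1) q = some 1
  s1 : ∀ s n q, V s e (2 * n) q = some 1 → mem n q
  s0 : ∀ s n q, V s e (2 * n) q = some 0 → ¬ mem n q
  t1 : ∀ s i q, V s e (2 * i + 1) q = some 1 → Em i q
  ord : ∀ n n', S act n' ⊆ S act n ↔ ∀ q, mem n q → mem n' q
  inf : ∀ T : Set ℕ, ∃ i, ∀ q, Em i q ↔ ∀ n ∈ T, mem n q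
  sup : ∀ T : Set ℕ, T.Nonempty → (∀ a ∈ T, ∀ b ∈ T, ∃ c ∈ T, ∀ q, (mem a q ∨ mem b q) → mem c q) → 
    ∃ i, ∀ q, Em i q ↔ ∃ n ∈ T, mem n q

section
variable {e : ℕ} {mem Em : ℕ → ℕ → Prop} (C : Ctx e mem Em)
include C

lemma Ctx.Zmono {τ τ' : ℕ} (h1 : 1 ≤ τ) (h2 : τ ≤ τ') (h3 : Alive e τ τ') {q : ℕ} (h : mem (cZ e τ) q) :
    mem (cZ e τ') q := by
  refine (C.ord (cZ e τ) (cZ e τ')).1 ?_ q h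
  unfold cZ
  rw [S_el _ _ _ _ (canon_Z e τ h1), S_el _ _ _ _ (canon_Z e τ' (by omega)), El_sub_iff]
  refine ⟨rfl, by omega, fun k hk => ?_⟩
  rw [Nat.testBit_two_pow] at hk
  simp at hk
  subst hk
  refine ⟨τ, by rw [Nat.testBit_two_pow]; simp, h2, fun u a b => ?_⟩
  have := h3 u b a
  omega

lemma Ctx.YZ {σ a x τ : ℕ} (ha : σ < a) 
    (hx : ∀ k, x.testBit k = true ↔ ((k < a ∧ Own e σ k ∧ val e k = 0) ∨ k = a + 1)) (hτ : 1 ≤ τ) :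
    (∀ q, mem (cY e σ x) q → mem (cZ e τ) q) ↔ (σ ≤ τ - 1 ∧ τ ∈ gen (act e) σ x) := by
  rw [← C.ord]
  unfold cZ cY
  rw [S_el _ _ _ _ (canon_Z e τ hτ), S_el _ _ _ _ (canon_Y ha hx), El_sub_iff]
  constructor
  · rintro ⟨-, h1, h2⟩
    exact ⟨h1, h2 τ (by rw [Nat.testBit_two_pow]; simp)⟩
  · rintro ⟨h1, h2⟩
    refine ⟨rfl, h1, fun k hk => ?_⟩
    rw [Nat.testBit_two_pow] at hk
    simp at hk
    subst hk
    exact h2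

lemma Ctx.caseM {σ : ℕ} (hinf : ∀ N, ∃ u, N ≤ u ∧ Own e σ u) : False := by
  classical
  have hA : ∀ N, ∃ u, N < u ∧ Own e σ u ∧ val e u ≠ 0 := by
    intro N
    obtain ⟨u, hu, ho⟩ := hinf (N + 1)
    by_cases hv : val e u = 0
    · have hex : ∃ u', u < u' ∧ Own e σ u' := by
        obtain ⟨u', h1, h2⟩ := hinf (u + 1)
        exact ⟨u', by omega, h2⟩
      obtain ⟨h1, h2⟩ := Nat.find_spec hex
      refine ⟨Nat.find hex, by omega, h2, fun h0 => ?_⟩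
      apply (h2.B h0).1
      exact ⟨u, h1, ho, hv, fun w hw1 hw2 hw3 => Nat.find_min hex hw2 ⟨hw1, hw3⟩⟩
    · exact ⟨u, by omega, ho, hv⟩
  have hAinf : {u | Own e σ u ∧ val e u ≠ 0}.Infinite := by
    apply Set.infinite_of_forall_exists_gt
    intro N
    obtain ⟨u, h1, h2⟩ := hA N
    exact ⟨u, h2, h1⟩
  let g := hAinf.natEmbedding
  have hg : ∀ i, Own e σ (g i : ℕ) ∧ val e (g i : ℕ) ≠ 0 := fun i => (g i).2
  have hginj : ∀ i j, (g i : ℕ) = g j → i = j := fun i j h => g.injective (Subtype.ext h)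
  have hw : ∀ i, WantA e (g i) σ (val e (g i) - 1) := fun i => (hg i).1.A (hg i).2
  choose a hPh x hx hY hZ hI using hw
  have hσa : ∀ i, σ < a i := fun i => (hPh i).2.1.lt (hPh i).2.2.1
  have hlt : ∀ i j, (g i : ℕ) < g j → (g i : ℕ) < a j := by
    intro i j hij
    by_contra hc
    rcases Nat.lt_or_ge (a j) (g i) with h | h
    · exact (hPh j).2.2.2 _ h hij (hg i).1
    · have : (g i : ℕ) = a j := by omega
      have h2 := (hPh j).2.2.1
      rw [← this] at h2
      exact (hg i).2 h2
  have key : ∀ i j, i ≠ j → mem (cZ e (a i)) (val e (g j) - 1) := by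
    intro i j hij
    have hne : (g i : ℕ) ≠ g j := fun h => hij (hginj i j h)
    rcases lt_or_gt_of_ne hne with h | h
    · have h2 := hlt i j h
      have h3 := (hPh i).1
      have h4 := C.s1 _ _ _ (hY j)
      refine (C.YZ (hσa j) (hx j) (τ := a i) (by have := hσa i; omega)).2 ⟨by have := hσa i; omega, ?_⟩ _ h4
      exact ⟨a i, (hx j (a i)).2 (Or.inl ⟨by omega, (hPh i).2.1, (hPh i).2.2.1⟩), le_rfl, fun u a b => by omega⟩
    · have h2 := hlt j i h
      obtain ⟨-, τ, b1, b2, b3, b4⟩ := (hPh i).2.1.B (hPh i).2.2.1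
      have h5 := C.s1 _ _ _ (b4 (g j) h2 (hg j).1 (hg j).2)
      exact C.Zmono (by omega) b1 b3 h5
  obtain ⟨i0, hi0⟩ := C.inf {n | ∃ i, Em i (val e (g i) - 1) ∧ n = cZ e (a i)}
  have hnot := C.s0 _ _ _ (hZ i0)
  have h1 : ¬ Em i0 (val e (g i0) - 1) := fun h => 
    hnot ((hi0 _).1 h _ ⟨i0, h, rfl⟩)
  apply h1
  rw [hi0]
  rintro n ⟨i, h2, rfl⟩
  apply key
  rintro rfl
  exact h1 h2

omit C in
lemma true_zero : True' e 0 := fun s u _ _ => Nat.zero_le _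

omit C in
lemma next_true {σ : ℕ} (hσ : True' e σ) (hfin : ∃ N, ∀ u, Own e σ u → u < N) :
    ∃ σ', σ < σ' ∧ True' e σ' ∧ idx e σ' = idx e σ + 1 := by
  classical
  by_cases hex : ∃ u, Own e σ u
  · obtain ⟨N, hN⟩ := hfin
    have hex2 : ∃ d, ∃ u, Own e σ u ∧ d + u = N := by
      obtain ⟨u, hu⟩ := hex
      exact ⟨N - u, u, hu, by have := hN u hu; omega⟩
    obtain ⟨s, hs, hd⟩ := Nat.find_spec hex2
    have hlast : ∀ u, Own e σ u → u ≤ s := by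
      intro u hu
      by_contra hc
      have := hN u hu
      exact Nat.find_min hex2 (m := N - u) (by omega) ⟨u, hu, by omega⟩
    refine ⟨s + 1, by have := hs.1; omega, ?_, ?_⟩
    · intro t u _ hu
      by_contra hc
      have h1 : σ ≤ act e u := hσ (u + 1) u (by omega) (by have := hs.1; omega)
      have h2 : act e u ≠ σ := by
        intro h
        have := hlast u ⟨by have := hs.1; omega, h⟩
        omega
      have h3 := (act_spec (e := e) (s := u) (by omega)).1 s (by omega) (by omega)
      rw [hs.2] at h3
      omega
    · rw [idx_succ, hs.2, min_eq_left hs.1]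
  · push Not at hex
    refine ⟨σ + 1, by omega, ?_, ?_⟩
    · intro t u _ hu
      have h1 : σ ≤ act e u := hσ (u + 1) u (by omega) (by omega)
      have h2 : act e u ≠ σ := fun h => hex u ⟨by omega, h⟩
      omega
    · have h1 : σ ≤ act e σ := hσ (σ + 1) σ (by omega) (by omega)
      rw [idx_succ, min_eq_right h1]

omit C in
lemma acts {σ s v : ℕ} (hσ : True' e σ) (hs : σ ≤ s) (hv : v ≤ s + 1) (h : Want e s σ v) : Own e σ s := by
  refine ⟨hs, le_antisymm (act_le hs hv h) (hσ (s + 1) s (by omega) hs)⟩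

lemma Ctx.caseI (hfin : ∀ σ, True' e σ → ∃ N, ∀ u, Own e σ u → u < N) : False := by
  classical
  have hJ : ∀ J, ∃ σ, True' e σ ∧ idx e σ = J := by
    intro J
    induction J with
    | zero => exact ⟨0, true_zero, idx_zero e⟩
    | succ J ih =>
      obtain ⟨σ, h1, h2⟩ := ih
      obtain ⟨σ', -, h3, h4⟩ := next_true h1 (hfin σ h1)
      exact ⟨σ', h3, by rw [h4, h2]⟩
  have hbig : ∀ N, ∃ σ, N ≤ σ ∧ True' e σ := by
    intro N
    induction N with
    | zero => exact ⟨0, le_rfl, true_zero⟩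
    | succ N ih =>
      obtain ⟨σ, h1, h2⟩ := ih
      obtain ⟨σ', h0, h3, h4⟩ := next_true h2 (hfin σ h2)
      exact ⟨σ', by omega, h3⟩
  have hmono : ∀ τ τ', 1 ≤ τ → τ ≤ τ' → True' e τ → ∀ q, mem (cZ e τ) q → mem (cZ e τ') q :=
    fun τ τ' h1 h2 h3 q h => C.Zmono h1 h2 (h3 τ') h
  obtain ⟨J, hJU⟩ := C.sup {n | ∃ τ, 1 ≤ τ ∧ True' e τ ∧ n = cZ e τ} (by
      obtain ⟨τ, h1, h2⟩ := hbig 1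
      exact ⟨_, τ, h1, h2, rfl⟩) (by
      rintro _ ⟨τ, h1, h2, rfl⟩ _ ⟨τ', h3, h4, rfl⟩
      rcases le_total τ τ' with h | h
      · exact ⟨_, ⟨τ', h3, h4, rfl⟩, fun q hq => hq.elim (hmono τ τ' h1 h h2 q) id⟩
      · exact ⟨_, ⟨τ, h1, h2, rfl⟩, fun q hq => hq.elim id (hmono τ' τ h3 h h4 q)⟩)
  obtain ⟨σ, hσ, hσJ⟩ := hJ J
  obtain ⟨N, hN⟩ := hfin σ hσ
  by_cases hlast : ∃ a, Own e σ a ∧ val e a = 0 ∧ ∀ u, Own e σ u → u ≤ a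
  · obtain ⟨a, ha, hva, hla⟩ := hlast
    have hσa := ha.lt hva
    obtain ⟨x, hx⟩ := exists_bits {k | (k < a ∧ Own e σ k ∧ val e k = 0) ∨ k = a + 1} 
      ((Set.finite_Iic (a + 1)).subset (by rintro k (h | h) <;> simp <;> omega))
    simp only [Set.mem_ofPred_eq] at hx
    have hnot : ¬ ∀ q, mem (cY e σ x) q → mem (cZ e a) q := by
      rw [C.YZ hσa hx (by omega)]
      rintro ⟨-, k, h1, h2, h3⟩
      rcases (hx k).1 h1 with h | h
      · have := h3 k le_rfl h.1
        rw [h.2.1.2] at this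
        omega
      · omega
    push Not at hnot
    obtain ⟨q, hq1, hq2⟩ := hnot
    have hEJ : Em J q := by
      rw [hJU]
      obtain ⟨τ, h1, h2⟩ := hbig (a + 1)
      refine ⟨_, ⟨τ, by omega, h2, rfl⟩, (C.YZ hσa hx (τ := τ) (by omega)).2 ⟨by omega, ?_⟩ q hq1⟩
      refine ⟨a + 1, (hx _).2 (Or.inr rfl), h1, fun u h3 h4 => ?_⟩
      have h5 := hσ (u + 1) u (by omega) (by omega)
      have h6 : act e u ≠ σ := by
        intro h
        have := hla u ⟨by omega, h⟩
        omega
      omega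
    obtain ⟨s, e1, e2, e3, e4, e5, e6⟩ := ((C.V1 _ _ hq1).and ((C.V0 _ _ hq2).and ((C.E1 _ _ hEJ).and
      ((eventually_ge_atTop q).and ((eventually_gt_atTop a).and (eventually_ge_atTop σ)))))).exists
    have hw : Want e s σ (q + 1) := by
      refine ⟨hσ s, Or.inr ⟨by omega, a, ⟨e5, ha, hva, fun u h1 h2 h3 => ?_⟩, x, hx, e1, e2, by rw [hσJ]; exact e3⟩⟩
      have := hla u h3
      omega
    have := hla s (acts hσ e6 (by omega) hw)
    omega
  · have hQ : ∀ u, Own e σ u → val e u ≠ 0 → ∃ τ, 1 ≤ τ ∧ True' e τ ∧ mem (cZ e τ) (val e u - 1) := by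
      intro u hu hv
      obtain ⟨a, h1, x, h2, h3, h4, h5⟩ := hu.A hv
      have h6 := C.t1 _ _ _ h5
      rw [hσJ, hJU] at h6
      obtain ⟨_, ⟨τ, h7, h8, rfl⟩, h9⟩ := h6
      exact ⟨τ, h7, h8, h9⟩
    have hτ : ∀ N, ∃ τ, σ < τ ∧ True' e τ ∧ ∀ u < N, Own e σ u → val e u ≠ 0 → mem (cZ e τ) (val e u - 1) := by
      intro N
      induction N with
      | zero =>
        obtain ⟨τ, h1, h2⟩ := hbig (σ + 1)
        exact ⟨τ, h1, h2, fun u hu => by omega⟩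
      | succ N ih =>
        obtain ⟨τ, h1, h2, h3⟩ := ih
        by_cases hN' : Own e σ N ∧ val e N ≠ 0
        · obtain ⟨τ', h4, h5, h6⟩ := hQ N hN'.1 hN'.2
          obtain ⟨τ'', h7, h8⟩ := hbig (max τ τ')
          have h9 := le_max_left τ τ'
          have h10 := le_max_right τ τ'
          refine ⟨τ'', by omega, h8, fun u hu ho hv => ?_⟩
          rcases Nat.lt_succ_iff_lt_or_eq.1 hu with hu | rfl
          · exact hmono τ τ'' (by omega) (by omega) h2 _ (h3 u hu ho hv)
          · exact hmono τ' τ'' (by omega) (by omega) h5 _ h6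
        · refine ⟨τ, h1, h2, fun u hu ho hv => ?_⟩
          rcases Nat.lt_succ_iff_lt_or_eq.1 hu with hu | rfl
          · exact h3 u hu ho hv
          · exact absurd ⟨ho, hv⟩ hN'
    obtain ⟨τ, h1, h2, h3⟩ := hτ N
    have hev : ∀ᶠ s in atTop, ∀ u ∈ Set.Iio N, (Own e σ u → val e u ≠ 0 → V s e (2 * cZ e τ) (val e u - 1) = some 1) := by
      rw [eventually_all_finite (Set.finite_Iio N)]
      intro u hu
      by_cases h : Own e σ u ∧ val e u ≠ 0
      · filter_upwards [C.V1 _ _ (h3 u hu h.1 h.2)] with s hs _ _ using hs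
      · filter_upwards with s ho hv using absurd ⟨ho, hv⟩ h
    obtain ⟨s, e1, e2, e3⟩ := (hev.and ((eventually_ge_atTop N).and (eventually_ge_atTop τ))).exists
    have hw : Want e s σ 0 := by
      refine ⟨hσ s, Or.inl ⟨rfl, ?_, τ, e3, h1, h2 s, fun u _ ho hv => e1 u (hN u ho) ho hv⟩⟩
      rintro ⟨a, h4, h5, h6, h7⟩
      apply hlast
      refine ⟨a, h5, h6, fun u hu => ?_⟩
      by_contra hc
      exact h7 u (by omega) (by have := hN u hu; omega) hu
    have := hN s (acts hσ (by omega) (by omega) hw)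
    omega

theorem Ctx.false : False := by
  by_cases h : ∀ σ, True' e σ → ∃ N, ∀ u, Own e σ u → u < N
  · exact C.caseI h
  · push Not at h
    obtain ⟨σ, -, h⟩ := h
    refine C.caseM (σ := σ) fun N => ?_
    obtain ⟨u, h1, h2⟩ := h N
    exact ⟨u, h2, h1⟩

end

end Lat


namespace Lat

open Filter Nat.Partrec

lemma ctx_of (E : ℕ → ℕ → ℕ → Bool) (hE : IsComputableCompleteSublatticeOfEq E) (φ : ℕ → ℕ)
    (hφ : Computable φ) (hord : ∀ i j : ℕ, S act j ⊆ S act i ↔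
            ∀ a b : ℕ, RelOfBool (E (φ i)) a b → RelOfBool (E (φ j)) a b) : False := by
  obtain ⟨hc, heq, -, hcl⟩ := hE
  let H : ℕ → ℕ := fun t => cond (cond (decide (t.unpair.1 % 2 = 0))
    (E (φ (t.unpair.1 / 2)) t.unpair.2.unpair.1 t.unpair.2.unpair.2)
    (E (t.unpair.1 / 2) t.unpair.2.unpair.1 t.unpair.2.unpair.2)) 1 0
  have hH : Computable H := by
    have u : Computable (fun t : ℕ => t.unpair) := Primrec.unpair.to_comp
    have u1 : Computable (fun t : ℕ => t.unpair.1) := Computable.fst.comp u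
    have u2 : Computable (fun t : ℕ => t.unpair.2) := Computable.snd.comp u
    have u3 : Computable (fun t : ℕ => t.unpair.2.unpair) := u.comp u2
    have u4 : Computable (fun t : ℕ => t.unpair.1 / 2) :=
      (Primrec.nat_div.comp (Primrec.fst.comp Primrec.unpair) (Primrec.const 2)).to_comp
    have u5 : Computable (fun t : ℕ => decide (t.unpair.1 % 2 = 0)) := by
      have : PrimrecPred (fun t : ℕ => t.unpair.1 % 2 = 0) :=
        Primrec.eq.comp (Primrec.nat_mod.comp (Primrec.fst.comp Primrec.unpair) (Primrec.const 2)) (Primrec.const 0)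
      exact this.decide.to_comp
    refine Computable.cond (Computable.cond u5 ?_ ?_) (Computable.const 1) (Computable.const 0)
    · exact hc.comp (Computable.pair (hφ.comp u4) u3)
    · exact hc.comp (Computable.pair u4 u3)
  obtain ⟨c, hcode⟩ := Code.exists_code.1 (Partrec.nat_iff.1 hH)
  have hev : ∀ t, Code.eval c t = Part.some (H t) := fun t => by rw [hcode]; rfl
  let e := Encodable.encode c
  have hV : ∀ s y q, V s e y q = Code.evaln s c (Nat.pair y q) := by
    intro s y q
    simp only [V, e, Denumerable.ofNat_encode]
  have hs : ∀ s y q v, V s e y q = some v → H (Nat.pair y q) = v := by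
    intro s y q v h
    rw [hV] at h
    have := Code.evaln_sound h
    rw [hev] at this
    exact (Part.mem_some_iff.1 this).symm
  have hco : ∀ y q, ∀ᶠ s in atTop, V s e y q = some (H (Nat.pair y q)) := by
    intro y q
    have : H (Nat.pair y q) ∈ Code.eval c (Nat.pair y q) := by rw [hev]; simp
    obtain ⟨k, hk⟩ := Code.evaln_complete.1 this
    filter_upwards [eventually_ge_atTop k] with s hs
    rw [hV]
    exact Code.evaln_mono hs hk
  let mem : ℕ → ℕ → Prop := fun n q => E (φ n) q.unpair.1 q.unpair.2 = true
  let Em : ℕ → ℕ → Prop := fun n q => E n q.unpair.1 q.unpair.2 = true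
  have H0 : ∀ n q, H (Nat.pair (2 * n) q) = cond (E (φ n) q.unpair.1 q.unpair.2) 1 0 := by
    intro n q; simp [H]
  have H1 : ∀ n q, H (Nat.pair (2 * n + 1) q) = cond (E n q.unpair.1 q.unpair.2) 1 0 := by
    intro n q
    have h1 : (2 * n + 1) % 2 = 1 := by omega
    have h2 : (2 * n + 1) / 2 = n := by omega
    simp [H, h1, h2]
  let sd : ℕ → Setoid ℕ := fun i => ⟨RelOfBool (E i), heq i⟩
  have hsd : ∀ i, sd i ∈ SetoidsOf E := fun i => ⟨i, fun a b => Iff.rfl⟩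
  refine Ctx.false (e := e) (mem := mem) (Em := Em) ?_
  constructor
  · intro n q h
    filter_upwards [hco (2 * n) q] with s hs
    rw [hs, H0]; simp [mem] at h; simp [h]
  · intro n q h
    filter_upwards [hco (2 * n) q] with s hs
    rw [hs, H0]; simp [mem] at h; simp [h]
  · intro n q h
    filter_upwards [hco (2 * n + 1) q] with s hs
    rw [hs, H1]; simp [Em] at h; simp [h]
  · intro s n q h
    have := hs _ _ _ _ h
    rw [H0] at this
    by_contra hc
    simp [mem] at hc
    simp [hc] at this
  · intro s n q h hc
    have := hs _ _ _ _ h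
    rw [H0] at this
    simp [mem] at hc
    simp [hc] at this
  · intro s n q h
    have := hs _ _ _ _ h
    rw [H1] at this
    by_contra hc
    simp [Em] at hc
    simp [hc] at this
  · intro n n'
    rw [hord]
    constructor
    · intro h q hq; exact h _ _ hq
    · intro h a b hab
      have := h (Nat.pair a b)
      simp only [mem, Nat.unpair_pair] at this
      exact this hab
  · intro T
    obtain ⟨i, hi⟩ := (hcl ((fun n => sd (φ n)) '' T) (by rintro _ ⟨n, -, rfl⟩; exact hsd _)).2
    refine ⟨i, fun q => ?_⟩
    show E i _ _ = true ↔ _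
    rw [← hi]
    constructor
    · intro h n hn
      exact h (sd (φ n)) ⟨n, hn, rfl⟩
    · rintro h _ ⟨n, hn, rfl⟩
      exact h n hn
  · intro T ⟨n0, hn0⟩ hdir
    have hdir' : ∀ a ∈ T, ∀ b ∈ T, ∃ c ∈ T, ∀ x y, (sd (φ a) x y ∨ sd (φ b) x y) → sd (φ c) x y := by
      intro a ha b hb
      obtain ⟨c, hc, h⟩ := hdir a ha b hb
      refine ⟨c, hc, fun x y hxy => ?_⟩
      have := h (Nat.pair x y)
      simp only [mem, Nat.unpair_pair] at this
      exact this hxy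
    let U : Setoid ℕ := ⟨fun x y => ∃ n ∈ T, sd (φ n) x y, 
      fun x => ⟨n0, hn0, (sd (φ n0)).refl x⟩, fun ⟨n, hn, h⟩ => ⟨n, hn, (sd (φ n)).symm h⟩,
      fun ⟨n, hn, h⟩ ⟨n', hn', h'⟩ => by
        obtain ⟨c, hc, h2⟩ := hdir' n hn n' hn'
        exact ⟨c, hc, (sd (φ c)).trans (h2 _ _ (Or.inl h)) (h2 _ _ (Or.inr h'))⟩⟩
    have hU : sSup ((fun n => sd (φ n)) '' T) = U := by
      apply le_antisymm
      · apply sSup_le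
        rintro _ ⟨n, hn, rfl⟩ x y h
        exact ⟨n, hn, h⟩
      · rintro x y ⟨n, hn, h⟩
        exact le_sSup (show sd (φ n) ∈ (fun n => sd (φ n)) '' T from ⟨n, hn, rfl⟩) h
    obtain ⟨i, hi⟩ := (hcl ((fun n => sd (φ n)) '' T) (by rintro _ ⟨n, -, rfl⟩; exact hsd _)).1
    rw [hU] at hi
    refine ⟨i, fun q => ?_⟩
    show E i _ _ = true ↔ _
    rw [← hi]
    rfl

open Classical in
theorem main : ∃ r : ℕ → ℕ → Bool, IsComputableAlgebraicLattice r ∧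
    ∀ i j, r i j = true ↔ S act j ⊆ S act i := by
  have hp := Ord_prim (fun p => act p.1 p.2) act_prim
  have hr : ∀ i j, decide (Ord (fun p => act p.1 p.2) i j) = true ↔ S act j ⊆ S act i := by
    intro i j
    rw [decide_eq_true_iff]
    exact Ord_iff _ i j
  refine ⟨fun i j => decide (Ord (fun p => act p.1 p.2) i j), lattice_of _ ?_ hr, hr⟩
  obtain ⟨_, h⟩ := hp
  refine Computable.of_eq (Primrec.to_comp h) ?_
  intro p
  congr

end Lat

theorem exists_computable_algebraic_lattice_not_computably_iso :
    ∃ r : ℕ → ℕ → Bool, IsComputableAlgebraicLattice r ∧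
      ∀ E : ℕ → ℕ → ℕ → Bool, IsComputableCompleteSublatticeOfEq E →
        ¬ ∃ φ : ℕ → ℕ, Computable φ ∧
          ∀ i j : ℕ, RelOfBool r i j ↔
            ∀ a b : ℕ, RelOfBool (E (φ i)) a b → RelOfBool (E (φ j)) a b := by
  obtain ⟨r, h1, h2⟩ := Lat.main
  refine ⟨r, h1, ?_⟩
  rintro E hE ⟨φ, hφ, h⟩
  exact Lat.ctx_of E hE φ hφ (fun i j => (h2 i j).symm.trans (h i j))
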